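/- arXiv:0806.0681 — 2 statements merged into one kernel-verified Lean document; each statement's English description precedes it below -/
import Mathlib

section
/- Every automorphism φ of K[x,y] over a field K can be written uniquely as a composition α₁∘β₁∘α₂∘β₂∘⋯∘α_k∘β_k∘λ, where each α_i is either the identity or of the form (y, x + a y) with a ∈ K (and α₂,…,α_k not the identity), each β_i = (x + h_i(y), y) with 0 ≠ h_i(y) ∈ y²K[y], and λ is an affine automorphism; moreover deg(φ) = deg(h_1)⋯deg(h_k). -/
open MvPolynomial

/-- The endomorphism of `K[x,y]` corresponding to the pair `α = (y, x + a y)`. -/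
noncomputable def alphaHom {K : Type*} [CommRing K] (a : K) :
    MvPolynomial (Fin 2) K →ₐ[K] MvPolynomial (Fin 2) K :=
  aeval ![X 1, X 0 + C a * X 1]

/-- `α₁` may be the identity (`none`) or `(y, x + a y)` (`some a`). -/
noncomputable def alphaOpt {K : Type*} [CommRing K] (o : Option K) :
    MvPolynomial (Fin 2) K →ₐ[K] MvPolynomial (Fin 2) K :=
  o.elim (AlgHom.id K _) alphaHom

/-- The endomorphism of `K[x,y]` corresponding to the pair `β = (x + h(y), y)`. -/
noncomputable def betaHom {K : Type*} [CommRing K] (h : Polynomial K) :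
    MvPolynomial (Fin 2) K →ₐ[K] MvPolynomial (Fin 2) K :=
  aeval ![X 0 + Polynomial.aeval (X 1 : MvPolynomial (Fin 2) K) h, X 1]

/-- Nonzero polynomials `h ∈ y²K[y]`, i.e. with vanishing constant and linear term. -/
def H (K : Type*) [CommRing K] : Type _ :=
  {h : Polynomial K // h ≠ 0 ∧ h.coeff 0 = 0 ∧ h.coeff 1 = 0}

/-- Data `((a₁,b₁,c₁),(a₂,b₂,c₂))` with `a₁b₂ ≠ a₂b₁` of an affine automorphism
`(a₁x + b₁y + c₁, a₂x + b₂y + c₂)`. -/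
def Aff (K : Type*) [CommRing K] : Type _ :=
  {t : (K × K × K) × (K × K × K) // t.1.1 * t.2.2.1 ≠ t.2.1 * t.1.2.1}

/-- The affine endomorphism of `K[x,y]` attached to data in `Aff K`. -/
noncomputable def lamOf {K : Type*} [CommRing K] (t : Aff K) :
    MvPolynomial (Fin 2) K →ₐ[K] MvPolynomial (Fin 2) K :=
  aeval ![C t.1.1.1 * X 0 + C t.1.1.2.1 * X 1 + C t.1.1.2.2,
          C t.1.2.1 * X 0 + C t.1.2.2.1 * X 1 + C t.1.2.2.2]

/-- Decomposition data for `φ = α₁∘β₁∘α₂∘β₂∘⋯∘α_k∘β_k∘λ`: either `k = 0` (`none`) and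
`φ = λ`, or `some (α₁, β₁, [(α₂,β₂),…,(α_k,β_k)])` together with `λ`; here `α₁` is the
identity or `(y, x+ay)`, the remaining `α_i = (y, x+a_iy)`, and `β_i = (x + h_i(y), y)`
with `0 ≠ h_i ∈ y²K[y]`. -/
def DecompData (K : Type*) [CommRing K] : Type _ :=
  Option (Option K × H K × List (K × H K)) × Aff K

/-- The endomorphism `α₁∘β₁∘α₂∘β₂∘⋯∘α_k∘β_k∘λ` attached to decomposition data. -/
noncomputable def wordHom {K : Type*} [CommRing K] (d : DecompData K) :
    MvPolynomial (Fin 2) K →ₐ[K] MvPolynomial (Fin 2) K :=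
  match d.1 with
  | none => lamOf d.2
  | some (oa, h, rest) =>
      (alphaOpt oa).comp ((betaHom h.1).comp
        (rest.foldr (fun p acc => (alphaHom p.1).comp ((betaHom p.2.1).comp acc))
          (lamOf d.2)))

/-- The product `deg(h₁)⋯deg(h_k)` of the degrees of the `β_i` in decomposition data. -/
def degProd {K : Type*} [CommRing K] (d : DecompData K) : ℕ :=
  match d.1 with
  | none => 1
  | some (_, h, rest) => h.1.natDegree * (rest.map fun p => p.2.1.natDegree).prod

/-!
Makar-Limanov's argument. The Jacobian of the two components `f, g` of an automorphism is a nonzero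
constant, and it bounds from below the degree in `y` of a polynomial expression in `f` and `g`, even
when leading parts cancel. Since `x` and `y` are such expressions, whenever both `f` and `g` involve
`y` the leading part of one of them is a constant multiple of a power of that of the other, and a
shear lowers the degree. Once a component is free of `y` the automorphism is triangular, so affine
maps and shears generate. An affine map is an `α` times an upper triangular one, and upper
triangular maps can be pushed through the `β`s to the right; this gives the normal form. In a normal
form each `β` followed by an `α` multiplies the larger of the two degrees by `deg h` and makes the
component degrees distinct, which yields the degree formula and, peeling off the last factors,
uniqueness.
-/

namespace PlaneAut

open scoped Polynomial

/-! ### Degree functions -/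

section Degree

variable {F : Type*} [Field F]

/-- `a` has degree less than `n`, with the convention that `0` has degree `-∞`, whatever the value
of `deg` at `0`. -/
def DegLT (deg : F → ℤ) (a : F) (n : ℤ) : Prop := a = 0 ∨ deg a < n

/-- The negative of a discrete (additive) valuation: an integer-valued degree function on a field.
Its value at `0` is irrelevant. -/
structure IsDegree (deg : F → ℤ) : Prop where
  mul : ∀ {a b : F}, a ≠ 0 → b ≠ 0 → deg (a * b) = deg a + deg b
  add : ∀ {a b : F} {n : ℤ}, DegLT deg a n → DegLT deg b n → DegLT deg (a + b) n

variable {deg : F → ℤ} {a b c : F} {m n : ℤ}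

theorem DegLT.mono (ha : DegLT deg a m) (h : m ≤ n) : DegLT deg a n :=
  ha.imp_right fun h' => h'.trans_le h

theorem degLT_zero (deg : F → ℤ) (n : ℤ) : DegLT deg 0 n := Or.inl rfl

theorem DegLT.lt (ha : DegLT deg a n) (h : a ≠ 0) : deg a < n := ha.resolve_left h

namespace IsDegree

variable (hdeg : IsDegree deg)
include hdeg

theorem degLT_mul (ha : DegLT deg a m) (hb : DegLT deg b n) : DegLT deg (a * b) (m + n - 1) := by
  by_cases ha₀ : a = 0
  · exact Or.inl (by rw [ha₀, zero_mul])
  by_cases hb₀ : b = 0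
  · exact Or.inl (by rw [hb₀, mul_zero])
  have := ha.lt ha₀
  have := hb.lt hb₀
  exact Or.inr (by rw [hdeg.mul ha₀ hb₀]; omega)

theorem degLT_mul_iff (hc : c ≠ 0) : DegLT deg (c * a) (deg c + n) ↔ DegLT deg a n := by
  by_cases ha : a = 0
  · simp only [ha, mul_zero, degLT_zero]
  · simp only [DegLT, ha, mul_eq_zero, hc, or_self, false_or, hdeg.mul hc ha]
    omega

theorem degLT_sum {ι : Type*} {s : Finset ι} {f : ι → F} (h : ∀ i ∈ s, DegLT deg (f i) n) :
    DegLT deg (∑ i ∈ s, f i) n :=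
  Finset.sum_induction f (DegLT deg · n) (fun _ _ => hdeg.add) (degLT_zero deg n) h

theorem one : deg 1 = 0 := by
  have := hdeg.mul (one_ne_zero (α := F)) one_ne_zero
  rw [mul_one] at this
  omega

theorem neg_one : deg (-1) = 0 := by
  have h1 : (-1 : F) ≠ 0 := neg_ne_zero.2 one_ne_zero
  have := hdeg.mul h1 h1
  rw [neg_one_mul, neg_neg, hdeg.one] at this
  omega

theorem degLT_neg (ha : DegLT deg a n) : DegLT deg (-a) n := by
  rw [← neg_one_mul, ← zero_add n, ← hdeg.neg_one]
  exact (hdeg.degLT_mul_iff (neg_ne_zero.2 one_ne_zero)).2 ha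

theorem degLT_sub (ha : DegLT deg a n) (hb : DegLT deg b n) : DegLT deg (a - b) n := by
  rw [sub_eq_add_neg]
  exact hdeg.add ha (hdeg.degLT_neg hb)

theorem inv (ha : a ≠ 0) : deg a⁻¹ = -deg a := by
  have := hdeg.mul ha (inv_ne_zero ha)
  rw [mul_inv_cancel₀ ha, hdeg.one] at this
  omega

theorem div (ha : a ≠ 0) (hb : b ≠ 0) : deg (a / b) = deg a - deg b := by
  rw [div_eq_mul_inv, hdeg.mul ha (inv_ne_zero hb), hdeg.inv hb, sub_eq_add_neg]

theorem pow (ha : a ≠ 0) (n : ℕ) : deg (a ^ n) = n * deg a := by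
  induction n with
  | zero => simp [hdeg.one]
  | succ n ih => rw [pow_succ, hdeg.mul (pow_ne_zero n ha) ha, ih]; push_cast; ring

theorem zpow (ha : a ≠ 0) (n : ℤ) : deg (a ^ n) = n * deg a := by
  obtain ⟨n, rfl | rfl⟩ := n.eq_nat_or_neg
  · rw [zpow_natCast, hdeg.pow ha]
  · rw [zpow_neg, zpow_natCast, hdeg.inv (pow_ne_zero n ha), hdeg.pow ha, neg_mul]

theorem zpow_mul_zpow (ha : a ≠ 0) (hb : b ≠ 0) (m n : ℤ) :
    deg (a ^ m * b ^ n) = m * deg a + n * deg b := by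
  rw [hdeg.mul (zpow_ne_zero m ha) (zpow_ne_zero n hb), hdeg.zpow ha, hdeg.zpow hb]

variable {K : Type*} [Field K] [Algebra K F] (hK : ∀ κ : K, DegLT deg (algebraMap K F κ) 1)
include hK

theorem degLT_aeval (ha : DegLT deg a 1) (r : K[X]) : DegLT deg (Polynomial.aeval a r) 1 := by
  induction r using Polynomial.induction_on with
  | C κ => simpa using hK κ
  | add p q hp hq => simpa using hdeg.add hp hq
  | monomial n κ ih =>
    rw [pow_succ, ← mul_assoc, map_mul, Polynomial.aeval_X]
    simpa using hdeg.degLT_mul ih ha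

theorem degLT_aeval_sub_aeval (ha : DegLT deg a 1) (hb : DegLT deg b 1) (h : DegLT deg (a - b) 0)
    (r : K[X]) : DegLT deg (Polynomial.aeval a r - Polynomial.aeval b r) 0 := by
  induction r using Polynomial.induction_on with
  | C κ => simpa using degLT_zero deg 0
  | add p q hp hq =>
    rw [map_add, map_add, add_sub_add_comm]
    exact hdeg.add hp hq
  | monomial n κ ih =>
    rw [pow_succ, ← mul_assoc]
    generalize Polynomial.C κ * Polynomial.X ^ n = r at ih
    have hsplit : Polynomial.aeval a (r * Polynomial.X) - Polynomial.aeval b (r * Polynomial.X) =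
        (Polynomial.aeval a r - Polynomial.aeval b r) * a + Polynomial.aeval b r * (a - b) := by
      simp only [map_mul, Polynomial.aeval_X]
      ring
    rw [hsplit]
    exact hdeg.add (by simpa using hdeg.degLT_mul ih ha)
      (by simpa using hdeg.degLT_mul (hdeg.degLT_aeval hK hb r) h)

end IsDegree

end Degree

/-! ### Jacobians -/

section Jacobian

variable {K F : Type*} [Field K] [Field F] [Algebra K F] (dx dy : Derivation K F F)

/-- The logarithmic Jacobian `(da / a) ∧ (db / b)`, in the coordinates `x`, `y`. -/
def logJac (a b : F) : F := (dx a * dy b - dy a * dx b) / (a * b)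

variable {a b : F}

theorem logJac_zpow_mul_zpow (ha : a ≠ 0) (hb : b ≠ 0) (s t u v : ℤ) :
    logJac dx dy (a ^ s * b ^ t) (b ^ u * a ^ v) = (s * u - t * v : ℤ) * logJac dx dy a b := by
  have has := zpow_ne_zero s ha
  have hbt := zpow_ne_zero t hb
  have hbu := zpow_ne_zero u hb
  have hav := zpow_ne_zero v ha
  simp only [logJac, Derivation.leibniz, Derivation.leibniz_zpow, smul_eq_mul, zsmul_eq_mul,
    zpow_sub_one₀ ha, zpow_sub_one₀ hb]
  generalize a ^ s = as, b ^ t = bt, b ^ u = bu, a ^ v = av at *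
  push_cast
  field_simp
  ring

theorem logJac_mul_sub_algebraMap (hb : b ≠ 0) {κ : K} (hbκ : b - algebraMap K F κ ≠ 0) :
    logJac dx dy a (b - algebraMap K F κ) * (b - algebraMap K F κ) = logJac dx dy a b * b := by
  simp only [logJac, map_sub, Derivation.map_algebraMap, sub_zero]
  field_simp

theorem degLT_derivation_div {deg : F → ℤ} (hdeg : IsDegree deg) (d : Derivation K F F) {e : ℤ}
    (ha : a ≠ 0) (hb : b ≠ 0) (hda : DegLT deg (d a) (deg a + e))
    (hdb : DegLT deg (d b) (deg b + e)) : DegLT deg (d (a / b)) (deg (a / b) + e) := by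
  have hsplit : d (a / b) = b⁻¹ * d a - a / b ^ 2 * d b := by
    rw [Derivation.leibniz_div, smul_eq_mul, smul_eq_mul, smul_eq_mul]
    field_simp
  rw [hsplit]
  have hb2 := pow_ne_zero 2 hb
  refine hdeg.degLT_sub ?_ ?_
  · refine ((hdeg.degLT_mul_iff (inv_ne_zero hb)).2 hda).mono (le_of_eq ?_)
    rw [hdeg.inv hb, hdeg.div ha hb]
    ring
  · refine ((hdeg.degLT_mul_iff (div_ne_zero ha hb2)).2 hdb).mono (le_of_eq ?_)
    rw [hdeg.div ha hb2, hdeg.div ha hb, hdeg.pow hb]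
    push_cast
    ring

variable {dx dy} in
theorem degLT_logJac {deg : F → ℤ} (hdeg : IsDegree deg)
    (hx : ∀ {z}, z ≠ 0 → DegLT deg (dx z) (deg z + 1))
    (hy : ∀ {z}, z ≠ 0 → DegLT deg (dy z) (deg z)) (ha : a ≠ 0) (hb : b ≠ 0) :
    DegLT deg (logJac dx dy a b) 0 := by
  have hnum : DegLT deg (dx a * dy b - dy a * dx b) (deg a + deg b) :=
    hdeg.degLT_sub ((hdeg.degLT_mul (hx ha) (hy hb)).mono (by omega))
      ((hdeg.degLT_mul (hy ha) (hx hb)).mono (by omega))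
  have := (hdeg.degLT_mul_iff (inv_ne_zero (mul_ne_zero ha hb))).2 hnum
  rwa [hdeg.inv (mul_ne_zero ha hb), hdeg.mul ha hb, neg_add_cancel, inv_mul_eq_div] at this

theorem logJac_algebraMap (κ : K) : logJac dx dy a (algebraMap K F κ) = 0 := by
  simp [logJac]

end Jacobian

/-! ### Laurent expressions -/

section Laurent

variable {K : Type*} [Field K]

/-- The `δ`-th row of `p`, where `p : ℤ × ℕ →₀ K` encodes the Laurent polynomial
`∑ p (i, j) uⁱ vʲ`: the coefficient of `u ^ δ`, as a polynomial in `v`. -/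
noncomputable def row (p : ℤ × ℕ →₀ K) (δ : ℤ) : K[X] :=
  ∑ x ∈ p.support with x.1 = δ, Polynomial.monomial x.2 (p x)

theorem coeff_row (p : ℤ × ℕ →₀ K) (δ : ℤ) (k : ℕ) : (row p δ).coeff k = p (δ, k) := by
  rw [row, Polynomial.finsetSum_coeff]
  simp only [Polynomial.coeff_monomial]
  rw [Finset.sum_filter, Finset.sum_eq_single (δ, k)]
  · simp
  · rintro ⟨i, j⟩ - hne
    grind
  · intro h
    simpa using h

theorem mem_support_iff_coeff_row {p : ℤ × ℕ →₀ K} {x : ℤ × ℕ} :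
    x ∈ p.support ↔ (row p x.1).coeff x.2 ≠ 0 := by
  rw [coeff_row, Finsupp.mem_support_iff]

theorem row_eq_zero_iff {p : ℤ × ℕ →₀ K} {δ : ℤ} : row p δ = 0 ↔ ∀ x ∈ p.support, x.1 ≠ δ := by
  constructor
  · rintro h x hx rfl
    exact mem_support_iff_coeff_row.1 hx (by rw [h, Polynomial.coeff_zero])
  · intro h
    ext k
    by_contra hk
    exact h (δ, k) (mem_support_iff_coeff_row.2 hk) rfl

theorem exists_row_eq {r : ℤ → K[X]} {S : Finset ℤ} (hr : ∀ δ ∉ S, r δ = 0) :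
    ∃ p : ℤ × ℕ →₀ K, ∀ δ, row p δ = r δ := by
  classical
  refine ⟨Finsupp.onFinset (S ×ˢ S.biUnion fun δ => (r δ).support)
    (fun x => (r x.1).coeff x.2) ?_, fun δ => ?_⟩
  · rintro ⟨δ, k⟩ hk
    have hδ : δ ∈ S := by_contra fun h => hk (by rw [hr δ h, Polynomial.coeff_zero])
    exact Finset.mem_product.2
      ⟨hδ, Finset.mem_biUnion.2 ⟨δ, hδ, Polynomial.mem_support_iff.2 hk⟩⟩
  · ext k
    rw [coeff_row, Finsupp.onFinset_apply]

variable {F : Type*} [Field F] [Algebra K F]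

/-- The value `∑ p (i, j) aⁱ bʲ` of the Laurent polynomial encoded by `p`. -/
noncomputable def laurentEval (a b : F) : (ℤ × ℕ →₀ K) →ₗ[K] F :=
  Finsupp.linearCombination K fun x => a ^ x.1 * b ^ x.2

theorem laurentEval_eq_sum_row (a b : F) {p : ℤ × ℕ →₀ K} {S : Finset ℤ}
    (hS : ∀ δ ∉ S, row p δ = 0) :
    laurentEval a b p = ∑ δ ∈ S, a ^ δ * Polynomial.aeval b (row p δ) := by
  have hmem : ∀ x ∈ p.support, x.1 ∈ S := fun x hx => by
    by_contra h
    exact row_eq_zero_iff.1 (hS _ h) x hx rfl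
  rw [laurentEval, Finsupp.linearCombination_apply, Finsupp.sum,
    ← Finset.sum_fiberwise_of_maps_to hmem]
  refine Finset.sum_congr rfl fun δ _ => ?_
  rw [row, map_sum, Finset.mul_sum]
  refine Finset.sum_congr rfl fun x hx => ?_
  rw [Polynomial.aeval_monomial, (Finset.mem_filter.1 hx).2, Algebra.smul_def]
  ring

theorem exists_row_eq_zero (p : ℤ × ℕ →₀ K) : ∃ S : Finset ℤ, ∀ δ ∉ S, row p δ = 0 := by
  classical
  refine ⟨p.support.image Prod.fst, fun δ hδ => row_eq_zero_iff.2 ?_⟩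
  rintro x hx rfl
  exact hδ (Finset.mem_image_of_mem _ hx)

theorem exists_laurentEval_add (p : ℤ × ℕ →₀ K) (κ : K) :
    ∃ p' : ℤ × ℕ →₀ K, (∀ δ, row p' δ = Polynomial.taylor κ (row p δ)) ∧
      ∀ a b : F, laurentEval a b p' = laurentEval a (b + algebraMap K F κ) p := by
  obtain ⟨S, hS⟩ := exists_row_eq_zero p
  have hS' : ∀ δ ∉ S, Polynomial.taylor κ (row p δ) = 0 := fun δ hδ => by rw [hS δ hδ, map_zero]
  obtain ⟨p', hp'⟩ := exists_row_eq hS'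
  refine ⟨p', hp', fun a b => ?_⟩
  rw [laurentEval_eq_sum_row a b fun δ hδ => (hp' δ).trans (hS' δ hδ),
    laurentEval_eq_sum_row a _ hS]
  simp [hp', Polynomial.taylor_apply, Polynomial.aeval_comp]

/-- The monomials `m = aˢ bᵗ` and `θ = b^α a^(-β)` generate the same group as `a` and `b`; the new
exponents `αi + βj` and `sj - ti` are found by solving for `a` and `b`. -/
theorem zpow_mul_zpow_eq_unimodular {a b : F} (ha : a ≠ 0) (hb : b ≠ 0) {α β s t : ℤ}
    (h : s * α + t * β = 1) (i j : ℤ) :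
    a ^ i * b ^ j =
      (a ^ s * b ^ t) ^ (α * i + β * j) * (b ^ α * a ^ (-β)) ^ (s * j - t * i) := by
  have hi : i = s * (α * i + β * j) + -β * (s * j - t * i) := by linear_combination (-i) * h
  have hj : j = t * (α * i + β * j) + α * (s * j - t * i) := by linear_combination (-j) * h
  calc a ^ i * b ^ j
    _ = a ^ (s * (α * i + β * j) + -β * (s * j - t * i)) *
        b ^ (t * (α * i + β * j) + α * (s * j - t * i)) := by rw [← hi, ← hj]
    _ = _ := by
      rw [zpow_add₀ ha, zpow_add₀ hb, zpow_mul, zpow_mul, zpow_mul, zpow_mul, mul_zpow, mul_zpow]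
      ring

/-- The exponents of `θ` after a unimodular change of monomials may be negative; multiplying by a
power of `θ` makes them natural numbers. -/
theorem exists_laurentEval_unimodular {a b : F} (ha : a ≠ 0) (hb : b ≠ 0) {α β s t : ℤ}
    (h : s * α + t * β = 1) (p : ℤ × ℕ →₀ K) :
    ∃ (p' : ℤ × ℕ →₀ K) (J : ℕ) (e : ℤ × ℕ → ℕ),
      (∀ x ∈ p.support, (e x : ℤ) = s * x.2 - t * x.1 + J) ∧
      (∀ x ∈ p.support, p' (α * x.1 + β * x.2, e x) = p x) ∧
      (∀ y ∈ p'.support, ∃ x ∈ p.support, (α * x.1 + β * x.2, e x) = y) ∧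
      laurentEval (a ^ s * b ^ t) (b ^ α * a ^ (-β)) p' =
        (b ^ α * a ^ (-β)) ^ J * laurentEval a b p := by
  classical
  have hθ : b ^ α * a ^ (-β) ≠ 0 := mul_ne_zero (zpow_ne_zero _ hb) (zpow_ne_zero _ ha)
  let J : ℕ := ∑ x ∈ p.support, (s * x.2 - t * x.1).natAbs
  let e : ℤ × ℕ → ℕ := fun x => (s * x.2 - t * x.1 + J).toNat
  let f : ℤ × ℕ → ℤ × ℕ := fun x => (α * x.1 + β * x.2, e x)
  have he : ∀ x ∈ p.support, (e x : ℤ) = s * x.2 - t * x.1 + J := fun x hx => by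
    have hle : (s * x.2 - t * x.1).natAbs ≤ J :=
      Finset.single_le_sum (f := fun x : ℤ × ℕ => (s * x.2 - t * x.1).natAbs)
        (fun _ _ => Nat.zero_le _) hx
    exact Int.toNat_of_nonneg (by omega)
  have hf : Set.InjOn f p.support := by
    intro x hx y hy hxy
    have hw : α * x.1 + β * x.2 = α * y.1 + β * y.2 := congrArg Prod.fst hxy
    have hexy : s * x.2 - t * x.1 + J = s * (y.2 : ℤ) - t * y.1 + J := by
      rw [← he x hx, ← he y hy]
      exact congrArg (fun z : ℤ × ℕ => (z.2 : ℤ)) hxy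
    have h1 : x.1 = y.1 := by linear_combination s * hw - β * hexy - (x.1 - y.1) * h
    have h2 : (x.2 : ℤ) = y.2 := by linear_combination t * hw + α * hexy - ((x.2 : ℤ) - y.2) * h
    exact Prod.ext h1 (by exact_mod_cast h2)
  refine ⟨p.mapDomain f, J, e, he,
    fun x hx => Finsupp.mapDomain_apply' _ p subset_rfl hf hx,
    fun y hy => Finset.mem_image.1 (Finsupp.mapDomain_support hy), ?_⟩
  rw [laurentEval, laurentEval, Finsupp.linearCombination_mapDomain,
    Finsupp.linearCombination_apply, Finsupp.linearCombination_apply, Finsupp.sum, Finsupp.sum,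
    Finset.mul_sum]
  refine Finset.sum_congr rfl fun x hx => ?_
  rw [← zpow_natCast b, zpow_mul_zpow_eq_unimodular ha hb h x.1 x.2, mul_smul_comm,
    Function.comp_apply, ← zpow_natCast _ (f x).2, ← zpow_natCast _ J]
  change _ • (_ ^ (α * x.1 + β * (x.2 : ℤ)) * _ ^ (e x : ℤ)) = _
  rw [he x hx, zpow_add₀ hθ, ← mul_assoc, mul_comm (_ ^ (J : ℤ))]

end Laurent

/-! ### The degree estimate -/

theorem rootMultiplicity_le_of_support {K : Type*} [Field K] {p : K[X]} (hp : p ≠ 0) {κ : K}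
    (hκ : κ ≠ 0) {q : ℕ} (h : ∀ i ∈ p.support, ∀ j ∈ p.support, i ≤ j + q) :
    p.rootMultiplicity κ ≤ q := by
  have hdeg : p.natDegree ≤ p.natTrailingDegree + q :=
    h _ (Polynomial.natDegree_mem_support_of_nonzero hp) _
      (Polynomial.natTrailingDegree_mem_support_of_nonzero hp)
  have hX : Polynomial.X ^ p.natTrailingDegree ∣ p :=
    Polynomial.X_pow_dvd_iff.2 fun d hd => Polynomial.coeff_eq_zero_of_lt_natTrailingDegree hd
  have hcoprime : IsCoprime ((Polynomial.X - Polynomial.C κ) ^ p.rootMultiplicity κ)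
      (Polynomial.X ^ p.natTrailingDegree) := by
    refine IsCoprime.pow ?_
    simpa using Polynomial.isCoprime_X_sub_C_of_isUnit_sub (a := κ) (b := 0) (by simpa using hκ)
  have hle := Polynomial.natDegree_le_of_dvd
    (hcoprime.mul_dvd (Polynomial.pow_rootMultiplicity_dvd p κ) hX) hp
  rw [Polynomial.natDegree_mul (pow_ne_zero _ (Polynomial.X_sub_C_ne_zero κ)) (by simp),
    Polynomial.natDegree_pow, Polynomial.natDegree_X_sub_C, Polynomial.natDegree_X_pow] at hle
  omega

/-- The exponents of `θ` occurring in one row of the new expression are congruent modulo `α`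
to those of `b` in the corresponding weight space, which is why few terms give few exponents. -/
theorem exists_laurentEval_unimodular_top {K F : Type*} [Field K] [Field F] [Algebra K F]
    {a b : F} (ha : a ≠ 0) (hb : b ≠ 0) {α β s t : ℤ} (h : s * α + t * β = 1) (hα : 0 < α)
    {p : ℤ × ℕ →₀ K} {x₀ : ℤ × ℕ} (hx₀ : x₀ ∈ p.support)
    (hmax : ∀ x ∈ p.support, α * x.1 + β * x.2 ≤ α * x₀.1 + β * x₀.2) :
    ∃ (p' : ℤ × ℕ →₀ K) (J : ℕ),
      laurentEval (a ^ s * b ^ t) (b ^ α * a ^ (-β)) p' =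
        (b ^ α * a ^ (-β)) ^ J * laurentEval a b p ∧
      (∀ y ∈ p'.support, y.1 ≤ α * x₀.1 + β * x₀.2) ∧
      row p' (α * x₀.1 + β * x₀.2) ≠ 0 ∧
      ∀ q : ℕ, (∀ x ∈ p.support, α * x.1 + β * x.2 = α * x₀.1 + β * x₀.2 →
          (x.2 : ℤ) < α * (q + 1)) →
        ∀ i ∈ (row p' (α * x₀.1 + β * x₀.2)).support,
        ∀ j ∈ (row p' (α * x₀.1 + β * x₀.2)).support, i ≤ j + q := by
  obtain ⟨p', J, e, he, hp', hsupp, heval⟩ := exists_laurentEval_unimodular ha hb h p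
  refine ⟨p', J, heval, fun y hy => ?_, fun hrow => ?_,
    fun q hq i hi j hj => ?_⟩
  · obtain ⟨x, hx, rfl⟩ := hsupp y hy
    exact hmax x hx
  · have hmem : (α * x₀.1 + β * x₀.2, e x₀) ∈ p'.support := by
      rw [Finsupp.mem_support_iff, hp' x₀ hx₀]
      exact Finsupp.mem_support_iff.1 hx₀
    exact row_eq_zero_iff.1 hrow _ hmem rfl
  · rw [Polynomial.mem_support_iff, coeff_row, ← Finsupp.mem_support_iff] at hi hj
    obtain ⟨x, hx, hxi⟩ := hsupp _ hi
    obtain ⟨y, hy, hyj⟩ := hsupp _ hj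
    obtain ⟨hwx, rfl⟩ := Prod.mk.inj hxi
    obtain ⟨hwy, rfl⟩ := Prod.mk.inj hyj
    have hexp : α * ((e x : ℤ) - e y) = (x.2 : ℤ) - y.2 := by
      rw [he x hx, he y hy]
      linear_combination (-t) * (hwx - hwy) + ((x.2 : ℤ) - y.2) * h
    have hlt : α * ((e x : ℤ) - e y) < α * (q + 1) := by linarith [hq x hx hwx]
    have := lt_of_mul_lt_mul_left hlt hα.le
    omega

theorem exists_gcd_bezout {m : ℤ} (hm : 0 < m) (n : ℤ) :
    ∃ α β s t : ℤ, 0 < α ∧ s * α + t * β = 1 ∧ m = α * Int.gcd m n ∧ n = β * Int.gcd m n := by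
  obtain ⟨α, β, hαβ, hmα, hnβ⟩ := Int.exists_gcd_one (Int.gcd_pos_of_ne_zero_left n hm.ne')
  obtain ⟨s, t, hst⟩ := Int.isCoprime_iff_gcd_eq_one.2 hαβ
  exact ⟨α, β, s, t, pos_of_mul_pos_left (hmα ▸ hm) (by positivity), hst, hmα, hnβ⟩

/-- A degree function on `F / K` together with two derivations whose Jacobian lowers degrees, such
that `K` is algebraically closed in the residue field: this is the input of Makar-Limanov's
argument. In the application, `F = K(x)(y)` with the degree in `y`. -/
structure JacobianDegree (K F : Type*) [Field K] [Field F] [Algebra K F] where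
  deg : F → ℤ
  isDegree : IsDegree deg
  deg_algebraMap : ∀ {κ : K}, κ ≠ 0 → deg (algebraMap K F κ) = 0
  exists_const : ∀ {θ : F}, θ ≠ 0 → deg θ = 0 → ∀ {r : K[X]}, r ≠ 0 →
    DegLT deg (Polynomial.aeval θ r) 0 → ∃ κ : K, DegLT deg (θ - algebraMap K F κ) 0
  dx : Derivation K F F
  dy : Derivation K F F
  logJac_lt : ∀ {a b : F}, a ≠ 0 → b ≠ 0 → DegLT deg (logJac dx dy a b) 0

namespace JacobianDegree

variable {K F : Type*} [Field K] [Field F] [Algebra K F] {D : JacobianDegree K F} {a b : F}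

theorem degLT_algebraMap (κ : K) : DegLT D.deg (algebraMap K F κ) 1 := by
  by_cases h : κ = 0
  · exact Or.inl (by rw [h, map_zero])
  · exact Or.inr (by rw [D.deg_algebraMap h]; exact one_pos)

theorem degLT_aeval_row (ha : a ≠ 0) (had : 0 < D.deg a) (hb : DegLT D.deg b 1)
    {p : ℤ × ℕ →₀ K} {δ₀ : ℤ} (hmax : ∀ x ∈ p.support, x.1 ≤ δ₀)
    (hlt : DegLT D.deg (laurentEval a b p) (δ₀ * D.deg a)) :
    DegLT D.deg (Polynomial.aeval b (row p δ₀)) 0 := by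
  obtain ⟨S, hS⟩ := exists_row_eq_zero p
  have hS' : ∀ δ ∉ insert δ₀ S, row p δ = 0 := fun δ hδ =>
    hS δ fun h => hδ (Finset.mem_insert_of_mem h)
  have hlower : DegLT D.deg (∑ δ ∈ (insert δ₀ S).erase δ₀, a ^ δ * Polynomial.aeval b (row p δ))
      (δ₀ * D.deg a) := by
    refine D.isDegree.degLT_sum fun δ hδ => ?_
    rcases (Finset.ne_of_mem_erase hδ).lt_or_gt with hlt | hgt
    · refine DegLT.mono (m := D.deg (a ^ δ) + 1)
        ((D.isDegree.degLT_mul_iff (zpow_ne_zero δ ha)).2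
          (D.isDegree.degLT_aeval degLT_algebraMap hb _)) ?_
      rw [D.isDegree.zpow ha]
      nlinarith
    · have hrow : row p δ = 0 := row_eq_zero_iff.2 fun x hx => ((hmax x hx).trans_lt hgt).ne
      exact Or.inl (by rw [hrow, map_zero, mul_zero])
  rw [laurentEval_eq_sum_row a b hS', ← Finset.add_sum_erase _ _ (Finset.mem_insert_self δ₀ S)]
    at hlt
  have htop := D.isDegree.degLT_sub hlt hlower
  rwa [add_sub_cancel_right, ← add_zero (δ₀ * D.deg a), ← D.isDegree.zpow ha,
    D.isDegree.degLT_mul_iff (zpow_ne_zero _ ha)] at htop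

theorem deg_unimodular (ha : a ≠ 0) (hb : b ≠ 0) {α β s t g : ℤ} (h : s * α + t * β = 1)
    (hag : D.deg a = α * g) (hbg : D.deg b = β * g) :
    D.deg (a ^ s * b ^ t) = g ∧ D.deg (b ^ α * a ^ (-β)) = 0 := by
  rw [D.isDegree.zpow_mul_zpow ha hb, D.isDegree.zpow_mul_zpow hb ha, hag, hbg]
  constructor
  · linear_combination g * h
  · ring

theorem deg_logJac_unimodular_sub_algebraMap (ha : a ≠ 0) (hb : b ≠ 0) {α β s t g : ℤ}
    (h : s * α + t * β = 1) (hag : D.deg a = α * g) (hbg : D.deg b = β * g)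
    (hJ : logJac D.dx D.dy a b ≠ 0) (κ : K) :
    b ^ α * a ^ (-β) - algebraMap K F κ ≠ 0 ∧
      logJac D.dx D.dy (a ^ s * b ^ t) (b ^ α * a ^ (-β) - algebraMap K F κ) ≠ 0 ∧
      D.deg (logJac D.dx D.dy (a ^ s * b ^ t) (b ^ α * a ^ (-β) - algebraMap K F κ)) =
        D.deg (logJac D.dx D.dy a b) - D.deg (b ^ α * a ^ (-β) - algebraMap K F κ) := by
  have hθ := (D.deg_unimodular ha hb h hag hbg).2
  have hθ₀ : b ^ α * a ^ (-β) ≠ 0 := mul_ne_zero (zpow_ne_zero _ hb) (zpow_ne_zero _ ha)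
  have hJθ : logJac D.dx D.dy (a ^ s * b ^ t) (b ^ α * a ^ (-β)) = logJac D.dx D.dy a b := by
    rw [logJac_zpow_mul_zpow _ _ ha hb, mul_neg, sub_neg_eq_add, h, Int.cast_one, one_mul]
  rw [← hJθ] at hJ ⊢
  generalize b ^ α * a ^ (-β) = θ at *
  generalize a ^ s * b ^ t = m at *
  have hη₀ : θ - algebraMap K F κ ≠ 0 := fun h => hJ <| by
    rw [sub_eq_zero.1 h, logJac_algebraMap]
  have hJη := logJac_mul_sub_algebraMap D.dx D.dy (a := m) hθ₀ hη₀
  have hJη₀ : logJac D.dx D.dy m (θ - algebraMap K F κ) ≠ 0 :=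
    left_ne_zero_of_mul (hJη ▸ mul_ne_zero hJ hθ₀)
  refine ⟨hη₀, hJη₀, ?_⟩
  have := congrArg D.deg hJη
  rw [D.isDegree.mul hJη₀ hη₀, D.isDegree.mul hJ hθ₀, hθ] at this
  omega

/-- If the terms of highest weight of a Laurent expression cancel, the element `θ` of degree `0` is
congruent to a nonzero constant `κ`; re-expanding in powers of `θ - κ`, the highest row starts with
an exponent `k` which is the multiplicity of a nonzero root, hence bounded by the number of terms
available for the cancellation. -/
theorem exists_cancellation (ha : a ≠ 0) (hb : b ≠ 0) {α β s t g : ℤ} (h : s * α + t * β = 1)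
    (hg : 0 < g) (hα : 0 < α) (hag : D.deg a = α * g) (hbg : D.deg b = β * g) {p : ℤ × ℕ →₀ K}
    {x₀ : ℤ × ℕ} (hx₀ : x₀ ∈ p.support)
    (hmax : ∀ x ∈ p.support, α * x.1 + β * x.2 ≤ α * x₀.1 + β * x₀.2)
    (hlt : DegLT D.deg (laurentEval a b p) ((α * x₀.1 + β * x₀.2) * g)) :
    ∃ κ : K, κ ≠ 0 ∧ DegLT D.deg (b ^ α * a ^ (-β) - algebraMap K F κ) 0 ∧
      ∃ (p' : ℤ × ℕ →₀ K) (k : ℕ),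
        (∀ n, DegLT D.deg (laurentEval (a ^ s * b ^ t) (b ^ α * a ^ (-β) - algebraMap K F κ) p') n ↔
          DegLT D.deg (laurentEval a b p) n) ∧
        (α * x₀.1 + β * x₀.2, k) ∈ p'.support ∧
        (∀ x ∈ p'.support, x.1 ≤ α * x₀.1 + β * x₀.2) ∧
        ∀ q : ℕ, (∀ x ∈ p.support, α * x.1 + β * x.2 = α * x₀.1 + β * x₀.2 →
          (x.2 : ℤ) < α * (q + 1)) → k ≤ q := by
  obtain ⟨p₁, J, hp₁, hp₁max, hrow, hexp⟩ :=
    exists_laurentEval_unimodular_top ha hb h hα hx₀ hmax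
  obtain ⟨hm, hθ⟩ := D.deg_unimodular ha hb h hag hbg
  have hm₀ : a ^ s * b ^ t ≠ 0 := mul_ne_zero (zpow_ne_zero _ ha) (zpow_ne_zero _ hb)
  have hθ₀ : b ^ α * a ^ (-β) ≠ 0 := mul_ne_zero (zpow_ne_zero _ hb) (zpow_ne_zero _ ha)
  generalize b ^ α * a ^ (-β) = θ at *
  generalize a ^ s * b ^ t = m at *
  generalize α * x₀.1 + β * x₀.2 = δ₀ at *
  have hp₁_iff (n : ℤ) :
      DegLT D.deg (laurentEval m θ p₁) n ↔ DegLT D.deg (laurentEval a b p) n := by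
    have := D.isDegree.degLT_mul_iff (a := laurentEval a b p) (n := n) (pow_ne_zero J hθ₀)
    rwa [← hp₁, D.isDegree.pow hθ₀, hθ, mul_zero, zero_add] at this
  obtain ⟨κ, hκ⟩ := D.exists_const hθ₀ hθ hrow
    (degLT_aeval_row hm₀ (hm ▸ hg) (Or.inr (hθ ▸ one_pos)) hp₁max (hm ▸ (hp₁_iff _).2 hlt))
  have hκ₀ : κ ≠ 0 := by
    rintro rfl
    rw [map_zero, sub_zero] at hκ
    exact (hκ.lt hθ₀).ne hθ
  obtain ⟨p', hp'row, hp'⟩ := exists_laurentEval_add (F := F) p₁ κ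
  refine ⟨κ, hκ₀, hκ, p', (row p₁ δ₀).rootMultiplicity κ, fun n => ?_, ?_, fun y hy => ?_,
    fun q hq => rootMultiplicity_le_of_support hrow hκ₀ (hexp q hq)⟩
  · rw [hp', sub_add_cancel, hp₁_iff]
  · rw [Finsupp.mem_support_iff, ← coeff_row, hp'row,
      Polynomial.rootMultiplicity_eq_natTrailingDegree, ← Polynomial.taylor_apply]
    exact Polynomial.trailingCoeff_nonzero_iff_nonzero.2
      ((map_ne_zero_iff _ (Polynomial.taylor_injective κ)).2 hrow)
  · by_contra! hgt
    have hrow₀ : row p₁ y.1 = 0 := row_eq_zero_iff.2 fun x hx => ((hp₁max x hx).trans_lt hgt).ne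
    exact row_eq_zero_iff.1 ((hp'row _).trans (by rw [hrow₀, map_zero])) y hy rfl

/-- Makar-Limanov's estimate: cancellation can lower the degree of a Laurent expression only by an
amount controlled by the Jacobian. Each cancellation replaces `(a, b)` by `(m, θ - κ)`, which brings
the degree of the logarithmic Jacobian closer to `0`. -/
theorem not_degLT_laurentEval (ha : a ≠ 0) (hb : b ≠ 0) (had : 0 < D.deg a)
    (hJ : logJac D.dx D.dy a b ≠ 0) {p : ℤ × ℕ →₀ K} {x₀ : ℤ × ℕ} (hx₀ : x₀ ∈ p.support)
    (hmax : ∀ x ∈ p.support,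
      x.1 * D.deg a + x.2 * D.deg b ≤ x₀.1 * D.deg a + x₀.2 * D.deg b) {q : ℕ}
    (hq : ∀ x ∈ p.support, x.1 * D.deg a + x.2 * D.deg b = x₀.1 * D.deg a + x₀.2 * D.deg b →
      (x.2 : ℤ) * Int.gcd (D.deg a) (D.deg b) < D.deg a * (q + 1)) :
    ¬ DegLT D.deg (laurentEval a b p)
      (x₀.1 * D.deg a + x₀.2 * D.deg b + q * (D.deg (logJac D.dx D.dy a b) + 1)) := by
  induction hN : (-D.deg (logJac D.dx D.dy a b)).toNat using Nat.strong_induction_on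
    generalizing a b p x₀ q with
  | h N ih =>
  intro hlt
  have hJneg := (D.logJac_lt ha hb).lt hJ
  obtain ⟨α, β, s, t, hα, h, hag, hbg⟩ := exists_gcd_bezout had (D.deg b)
  generalize (Int.gcd (D.deg a) (D.deg b) : ℤ) = g at hq hag hbg
  have hg : 0 < g := pos_of_mul_pos_right (hag ▸ had) hα.le
  have hweight (x : ℤ × ℕ) : x.1 * D.deg a + x.2 * D.deg b = (α * x.1 + β * x.2) * g := by
    rw [hag, hbg]; ring
  simp only [hweight, mul_le_mul_iff_left₀ hg, mul_left_inj' hg.ne'] at hmax hq hlt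
  obtain ⟨κ, -, hκ, p', k, hp', hk, hp'max, hkq⟩ :=
    exists_cancellation ha hb h hg hα hag hbg hx₀ hmax (hlt.mono (by nlinarith))
  replace hkq : k ≤ q := hkq q fun x hx hw =>
    lt_of_mul_lt_mul_right ((hq x hx hw).trans_eq (by rw [hag]; ring)) hg.le
  have hm := (deg_unimodular ha hb h hag hbg).1
  have hm₀ : a ^ s * b ^ t ≠ 0 := mul_ne_zero (zpow_ne_zero _ ha) (zpow_ne_zero _ hb)
  obtain ⟨hη₀, hJη₀, hdegJ⟩ := deg_logJac_unimodular_sub_algebraMap ha hb h hag hbg hJ κ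
  generalize a ^ s * b ^ t = m at *
  have hη := hκ.lt hη₀
  generalize b ^ α * a ^ (-β) - algebraMap K F κ = η at *
  have hJη_neg := (D.logJac_lt hm₀ hη₀).lt hJη₀
  obtain ⟨x₁, hx₁, hx₁max⟩ := p'.support.exists_max_image
    (fun x : ℤ × ℕ => x.1 * D.deg m + x.2 * D.deg η) ⟨_, hk⟩
  have hweight_le := hx₁max _ hk
  simp only [hm] at hx₁max hweight_le
  refine ih _ (by omega) hm₀ hη₀ (hm ▸ hg) hJη₀ hx₁ (by rwa [hm]) (q := k) ?_ rfl ?_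
  · intro x hx hxx₁
    rw [hm] at hxx₁ ⊢
    have hxk : (x.2 : ℤ) ≤ k := by nlinarith [hp'max x hx]
    have hgcd : (Int.gcd g (D.deg η) : ℤ) ≤ g := Int.gcd_le_left _ hg
    nlinarith
  · rw [hp', hm, hdegJ]
    refine hlt.mono ?_
    have : (k : ℤ) ≤ q := by exact_mod_cast hkq
    nlinarith

theorem not_degLT_laurentEval_of_two_le (ha : a ≠ 0) (hb : b ≠ 0) {α β : ℤ} (hα : 2 ≤ α)
    (hβ : 2 ≤ β) (had : 0 < D.deg a) (hag : D.deg a = α * Int.gcd (D.deg a) (D.deg b))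
    (hbg : D.deg b = β * Int.gcd (D.deg a) (D.deg b)) (hJ : logJac D.dx D.dy a b ≠ 0)
    (hJdeg : D.deg (logJac D.dx D.dy a b) = -(D.deg a + D.deg b)) {p : ℤ × ℕ →₀ K}
    (hp : ∀ x ∈ p.support, 0 ≤ x.1) {x₀ : ℤ × ℕ} (hx₀ : x₀ ∈ p.support)
    (hmax : ∀ x ∈ p.support, α * x.1 + β * x.2 ≤ α * x₀.1 + β * x₀.2)
    (hpos : 0 < α * x₀.1 + β * x₀.2) : ¬ DegLT D.deg (laurentEval a b p) 1 := by
  have hgcd : (0 : ℤ) < Int.gcd (D.deg a) (D.deg b) :=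
    Int.natCast_pos.2 (Int.gcd_pos_of_ne_zero_left _ had.ne')
  have hq := not_degLT_laurentEval (D := D) ha hb had hJ hx₀
    (q := ((α * x₀.1 + β * x₀.2) / (α * β)).toNat)
  rw [hJdeg] at hq
  generalize hg : (Int.gcd (D.deg a) (D.deg b) : ℤ) = g at *
  have hweight (x : ℤ × ℕ) : x.1 * D.deg a + x.2 * D.deg b = (α * x.1 + β * x.2) * g := by
    rw [hag, hbg]; ring
  simp only [hweight, mul_le_mul_iff_left₀ hgcd, mul_left_inj' hgcd.ne'] at hq
  generalize α * x₀.1 + β * x₀.2 = E at *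
  rw [Int.toNat_of_nonneg (by positivity)] at hq
  have hαβ : 0 < α * β := by positivity
  have hE : E < α * β * (E / (α * β) + 1) := by
    rw [mul_comm]; exact Int.lt_ediv_add_one_mul_self E hαβ
  have hE' : α * β * (E / (α * β)) ≤ E := Int.mul_ediv_self_le hαβ.ne'
  have hq₀ : 0 ≤ E / (α * β) := Int.ediv_nonneg hpos.le hαβ.le
  generalize E / (α * β) = q at *
  refine fun hlt => hq hmax (fun x hx hxE => ?_) (hlt.mono ?_)
  · have : 0 ≤ α * x.1 := mul_nonneg (by positivity) (hp x hx)
    have : (x.2 : ℤ) < α * (q + 1) := by nlinarith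
    rw [hag]
    nlinarith
  · have hsum : α + β ≤ α * β := by nlinarith
    have hqE : q * (α + β) ≤ E := by nlinarith
    rw [hag, hbg]
    rcases hq₀.eq_or_lt with rfl | hq_pos
    · nlinarith
    · nlinarith

/-- If `b ^ α / a ^ β` is congruent to a nonzero constant and `α = 1` or `β = 1`, a power of one of
`a`, `b` cancels the leading term of the other. -/
theorem exists_degLT_sub_pow (ha : a ≠ 0) {α β : ℤ} (hα : 0 < α) (hβ : 0 < β)
    (hdeg : β * D.deg a = α * D.deg b) (h : α = 1 ∨ β = 1) {κ : K} (hκ₀ : κ ≠ 0)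
    (hκ : DegLT D.deg (b ^ α * a ^ (-β) - algebraMap K F κ) 0) :
    (∃ (κ : K) (k : ℕ), DegLT D.deg (a - algebraMap K F κ * b ^ k) (D.deg a)) ∨
      ∃ (κ : K) (k : ℕ), DegLT D.deg (b - algebraMap K F κ * a ^ k) (D.deg b) := by
  lift α to ℕ using hα.le
  lift β to ℕ using hβ.le
  have haβ := pow_ne_zero β ha
  have hbα : DegLT D.deg (b ^ α - algebraMap K F κ * a ^ β) (D.deg (a ^ β)) := by
    rw [zpow_natCast, zpow_neg, zpow_natCast] at hκ
    replace hκ := (D.isDegree.degLT_mul_iff haβ).2 hκ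
    rwa [add_zero, mul_sub, mul_comm (b ^ α), mul_inv_cancel_left₀ haβ, mul_comm (a ^ β)] at hκ
  rw [D.isDegree.pow ha, hdeg] at hbα
  rcases h with h | h <;> obtain rfl := Nat.cast_eq_one.1 h
  · right
    exact ⟨κ, β, by simpa using hbα⟩
  · left
    have hκ' : algebraMap K F (-κ⁻¹) ≠ 0 := by simpa using hκ₀
    refine ⟨κ⁻¹, α, ?_⟩
    have := (D.isDegree.degLT_mul_iff hκ').2 hbα
    rw [D.deg_algebraMap (by simpa using hκ₀), zero_add, ← hdeg, Nat.cast_one, one_mul] at this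
    convert this using 1
    have : algebraMap K F κ ≠ 0 := by simpa using hκ₀
    simp only [map_neg, map_inv₀]
    field_simp
    ring

/-- A polynomial relation forces a cancellation of leading terms. It could only involve high powers
of both elements if it lowered the degree by more than the Jacobian allows. -/
theorem exists_degLT_sub_pow_of_laurentEval (ha : a ≠ 0) (hb : b ≠ 0) (had : 0 < D.deg a)
    (hbd : 0 < D.deg b) (hJ : logJac D.dx D.dy a b ≠ 0)
    (hJdeg : D.deg (logJac D.dx D.dy a b) = -(D.deg a + D.deg b)) {p : ℤ × ℕ →₀ K}
    (hp : ∀ x ∈ p.support, 0 ≤ x.1) (hp₀ : ∃ x ∈ p.support, x ≠ 0)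
    (hlt : DegLT D.deg (laurentEval a b p) 1) :
    (∃ (κ : K) (k : ℕ), DegLT D.deg (a - algebraMap K F κ * b ^ k) (D.deg a)) ∨
      ∃ (κ : K) (k : ℕ), DegLT D.deg (b - algebraMap K F κ * a ^ k) (D.deg b) := by
  obtain ⟨α, β, s, t, hα, h, hag, hbg⟩ := exists_gcd_bezout had (D.deg b)
  have hg : (0 : ℤ) < Int.gcd (D.deg a) (D.deg b) := pos_of_mul_pos_right (hag ▸ had) hα.le
  have hβ : 0 < β := pos_of_mul_pos_left (hbg ▸ hbd) hg.le
  obtain ⟨x₁, hx₁, hne⟩ := hp₀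
  obtain ⟨x₀, hx₀, hmax⟩ :=
    p.support.exists_max_image (fun x : ℤ × ℕ => α * x.1 + β * x.2) ⟨x₁, hx₁⟩
  have hpos : 0 < α * x₀.1 + β * x₀.2 := by
    refine lt_of_lt_of_le ?_ (hmax x₁ hx₁)
    have h₁ := hp x₁ hx₁
    rcases h₁.eq_or_lt with h₁ | h₁
    · have : x₁.2 ≠ 0 := fun h₂ => hne (Prod.ext h₁.symm h₂)
      positivity
    · positivity
  obtain ⟨κ, hκ₀, hκ, -⟩ :=
    exists_cancellation ha hb h hg hα hag hbg hx₀ hmax (hlt.mono (by nlinarith))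
  refine exists_degLT_sub_pow ha hα hβ (by linear_combination β * hag - α * hbg) ?_ hκ₀ hκ
  by_contra! hne
  exact not_degLT_laurentEval_of_two_le ha hb (by omega) (by omega) had hag hbg hJ hJdeg hp hx₀
    hmax hpos hlt

end JacobianDegree

/-! ### The degree on rational functions -/

section FractionField

variable {R B : Type*} [CommRing R] [CommRing B] [Algebra R B] (F : Type*) [Field F]
  [Algebra B F] [Algebra R F] [IsScalarTower R B F] [IsFractionRing B F]

theorem exists_derivation_fractionRing (d : Derivation R B B) :
    ∃ D : Derivation R F F, ∀ b, D (algebraMap B F b) = algebraMap B F (d b) := by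
  have := Algebra.FormallyEtale.of_isLocalization (Rₘ := F) (nonZeroDivisors B)
  have hbase := KaehlerDifferential.isBaseChange_of_formallyEtale R B F
  refine ⟨(hbase.lift ((Algebra.linearMap B F).comp d.liftKaehlerDifferential)).compDer
    (KaehlerDifferential.D R F), fun b => ?_⟩
  have hlift := hbase.lift_eq ((Algebra.linearMap B F).comp d.liftKaehlerDifferential)
    (KaehlerDifferential.D R B b)
  rw [KaehlerDifferential.map_D] at hlift
  simpa using hlift

/-- The extension of a derivation of a domain to its fraction field. -/
noncomputable def fractionDerivation (d : Derivation R B B) : Derivation R F F :=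
  (exists_derivation_fractionRing F d).choose

theorem fractionDerivation_algebraMap (d : Derivation R B B) (b : B) :
    fractionDerivation F d (algebraMap B F b) = algebraMap B F (d b) :=
  (exists_derivation_fractionRing F d).choose_spec b

end FractionField

section RatFunc

variable {L : Type*} [Field L]

theorem isDegree_intDegree : IsDegree (RatFunc.intDegree (K := L)) where
  mul := RatFunc.intDegree_mul
  add {a b n} ha hb := by
    by_cases ha₀ : a = 0
    · rwa [ha₀, zero_add]
    by_cases hb₀ : b = 0
    · rwa [hb₀, add_zero]
    by_cases h : a + b = 0
    · exact Or.inl h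
    · exact Or.inr ((RatFunc.intDegree_add_le hb₀ h).trans_lt (max_lt (ha.lt ha₀) (hb.lt hb₀)))

theorem degLT_intDegree_algebraMap {p : L[X]} {n : ℕ} :
    DegLT RatFunc.intDegree (algebraMap L[X] (RatFunc L) p) n ↔ p.degree < n := by
  by_cases hp : p = 0
  · simp [hp, degLT_zero]
  · have := RatFunc.algebraMap_ne_zero hp
    simp [DegLT, this, RatFunc.intDegree_polynomial, Polynomial.degree_eq_natDegree hp]

theorem degLT_intDegree_C (ρ : L) : DegLT RatFunc.intDegree (RatFunc.C ρ) 1 :=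
  Or.inr (by rw [RatFunc.intDegree_C]; exact one_pos)

theorem exists_degLT_sub_C {θ : RatFunc L} (hθ : θ ≠ 0) (h : θ.intDegree = 0) :
    ∃ ρ : L, DegLT RatFunc.intDegree (θ - RatFunc.C ρ) 0 := by
  have hnum := RatFunc.num_ne_zero hθ
  have hdenom := RatFunc.algebraMap_ne_zero θ.denom_ne_zero
  have hdegree : θ.num.degree = θ.denom.degree := by
    rw [RatFunc.intDegree] at h
    rw [Polynomial.degree_eq_natDegree hnum, Polynomial.degree_eq_natDegree θ.denom_ne_zero]
    exact_mod_cast sub_eq_zero.1 h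
  refine ⟨θ.num.leadingCoeff, (isDegree_intDegree.degLT_mul_iff hdenom).1 ?_⟩
  have hsub : algebraMap L[X] (RatFunc L) θ.denom * (θ - RatFunc.C θ.num.leadingCoeff) =
      algebraMap _ _ (θ.num - Polynomial.C θ.num.leadingCoeff * θ.denom) := by
    have hθ_num : algebraMap L[X] (RatFunc L) θ.denom * θ = algebraMap _ _ θ.num := by
      rw [mul_comm, ← eq_div_iff hdenom, RatFunc.num_div_denom]
    rw [mul_sub, hθ_num, map_sub, map_mul, RatFunc.algebraMap_C, mul_comm (RatFunc.C _)]
  rw [hsub, RatFunc.intDegree_polynomial, add_zero, degLT_intDegree_algebraMap,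
    ← Polynomial.degree_eq_natDegree θ.denom_ne_zero, ← hdegree]
  have hlead := Polynomial.leadingCoeff_ne_zero.2 hnum
  refine Polynomial.degree_sub_lt_left ?_ hnum ?_
  · rw [Polynomial.degree_C_mul hlead, hdegree]
  · rw [Polynomial.leadingCoeff_mul, Polynomial.leadingCoeff_C, θ.monic_denom.leadingCoeff,
      mul_one]

variable {K : Type*} [Field K] [Algebra K L]

theorem aeval_eq_zero_of_degLT {θ : RatFunc L} {ρ : L} (hθ : θ.intDegree = 0)
    (hρ : DegLT RatFunc.intDegree (θ - RatFunc.C ρ) 0) {r : K[X]}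
    (hr : DegLT RatFunc.intDegree (Polynomial.aeval θ r) 0) : Polynomial.aeval ρ r = 0 := by
  have hK (κ : K) : DegLT RatFunc.intDegree (algebraMap K (RatFunc L) κ) 1 :=
    degLT_intDegree_C (algebraMap K L κ)
  have hC : Polynomial.aeval (RatFunc.C ρ) r = RatFunc.C (Polynomial.aeval ρ r) :=
    Polynomial.aeval_algebraMap_apply (RatFunc L) ρ r
  have hlt := isDegree_intDegree.degLT_sub hr (isDegree_intDegree.degLT_aeval_sub_aeval hK
    (Or.inr (by rw [hθ]; exact one_pos)) (degLT_intDegree_C ρ) hρ r)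
  rw [sub_sub_cancel, hC, DegLT, RatFunc.intDegree_C] at hlt
  simpa using hlt

theorem degLT_fractionDerivation {d : Derivation K L[X] L[X]} {e : ℤ}
    (hd : ∀ p ≠ 0, DegLT RatFunc.intDegree (algebraMap L[X] (RatFunc L) (d p)) (p.natDegree + e))
    {z : RatFunc L} (hz : z ≠ 0) :
    DegLT RatFunc.intDegree (fractionDerivation (RatFunc L) d z) (z.intDegree + e) := by
  have hpoly : ∀ p : L[X], p ≠ 0 → DegLT RatFunc.intDegree
      (fractionDerivation (RatFunc L) d (algebraMap _ _ p))
      ((algebraMap L[X] (RatFunc L) p).intDegree + e) := fun p hp => by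
    rw [fractionDerivation_algebraMap, RatFunc.intDegree_polynomial]
    exact hd p hp
  have := degLT_derivation_div isDegree_intDegree (fractionDerivation (RatFunc L) d)
    (RatFunc.algebraMap_ne_zero (RatFunc.num_ne_zero hz))
    (RatFunc.algebraMap_ne_zero z.denom_ne_zero) (hpoly _ (RatFunc.num_ne_zero hz))
    (hpoly _ z.denom_ne_zero)
  rwa [RatFunc.num_div_denom] at this

/-- The derivation of `L[X]` which applies `δ` to all coefficients. -/
noncomputable def coeffDerivation (δ : Derivation K L L) : Derivation K L[X] L[X] :=
  PolynomialModule.equivPolynomialSelf.compDer δ.mapCoeffs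

theorem coeff_coeffDerivation (δ : Derivation K L L) (p : L[X]) (i : ℕ) :
    (coeffDerivation δ p).coeff i = δ (p.coeff i) := rfl

theorem coeffDerivation_X (δ : Derivation K L L) : coeffDerivation δ Polynomial.X = 0 := by
  ext i
  rw [coeff_coeffDerivation, Polynomial.coeff_X, apply_ite δ, Derivation.map_one_eq_zero, map_zero,
    ite_self, Polynomial.coeff_zero]

theorem coeffDerivation_C (δ : Derivation K L L) (c : L) :
    coeffDerivation δ (Polynomial.C c) = Polynomial.C (δ c) := by
  ext i
  rw [coeff_coeffDerivation, Polynomial.coeff_C, Polynomial.coeff_C, apply_ite δ, map_zero]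

theorem degree_coeffDerivation_le (δ : Derivation K L L) (p : L[X]) :
    (coeffDerivation δ p).degree ≤ p.degree := by
  refine Polynomial.degree_le_iff_coeff_zero _ _ |>.2 fun n hn => ?_
  rw [coeff_coeffDerivation, Polynomial.coeff_eq_zero_of_degree_lt hn, map_zero]

/-- The degree on `L(X)`, with a derivation of `L` extended to the coefficients and `∂ / ∂X`. -/
noncomputable def ratFuncJacobianDegree (hL : ∀ a : L, IsAlgebraic K a → ∃ κ, algebraMap K L κ = a)
    (δ : Derivation K L L) : JacobianDegree K (RatFunc L) where
  deg := RatFunc.intDegree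
  isDegree := isDegree_intDegree
  deg_algebraMap _ := RatFunc.intDegree_C _
  exists_const {θ} hθ₀ hθ r hr₀ hr := by
    obtain ⟨ρ, hρ⟩ := exists_degLT_sub_C hθ₀ hθ
    obtain ⟨κ, rfl⟩ := hL ρ ⟨r, hr₀, aeval_eq_zero_of_degLT hθ hρ hr⟩
    exact ⟨κ, hρ⟩
  dx := fractionDerivation (RatFunc L) (coeffDerivation δ)
  dy := fractionDerivation (RatFunc L) ((Polynomial.derivative' (R := L)).restrictScalars K)
  logJac_lt := degLT_logJac isDegree_intDegree
    (degLT_fractionDerivation fun p hp => degLT_intDegree_algebraMap.2 <|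
      (degree_coeffDerivation_le δ p).trans_lt <| by
        rw [Polynomial.degree_eq_natDegree hp]; exact_mod_cast Nat.lt_succ_self _)
    fun hz => by
      simpa using degLT_fractionDerivation (e := 0) (fun p hp => by
        rw [add_zero, degLT_intDegree_algebraMap, ← Polynomial.degree_eq_natDegree hp]
        exact Polynomial.degree_derivative_lt hp) hz

end RatFunc

/-! ### Lowering the degree in `y` -/

theorem algHom_ext_fin_two {R A : Type*} [CommSemiring R] [Semiring A] [Algebra R A]
    {f g : MvPolynomial (Fin 2) R →ₐ[R] A} (h₀ : f (X 0) = g (X 0)) (h₁ : f (X 1) = g (X 1)) :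
    f = g :=
  algHom_ext (Fin.forall_fin_two.2 ⟨h₀, h₁⟩)

section ChainRule

variable {σ R : Type*} [CommRing R]

theorem derivation_algHom_apply [Fintype σ] {A : Type*} [CommRing A] [Algebra R A]
    (d : Derivation R A A) (f : MvPolynomial σ R →ₐ[R] A) (p : MvPolynomial σ R) :
    d (f p) = ∑ i, f (pderiv i p) * d (f (X i)) := by
  classical
  induction p using MvPolynomial.induction_on with
  | C a => simp [← algebraMap_eq]
  | add p q hp hq => simp only [map_add, hp, hq, add_mul, Finset.sum_add_distrib]
  | mul_X p j hp =>
    simp only [map_mul, Derivation.leibniz, hp, smul_eq_mul, map_add, add_mul,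
      Finset.sum_add_distrib, pderiv_X, Pi.single_apply, apply_ite f, map_zero, mul_ite,
      mul_one, mul_zero, ite_mul, zero_mul, Finset.sum_ite_eq,
      Finset.mem_univ, if_true, Finset.mul_sum, mul_assoc]

/-- The Jacobian determinant of a pair of polynomials in two variables. -/
noncomputable def jacobian (a b : MvPolynomial (Fin 2) R) : MvPolynomial (Fin 2) R :=
  pderiv 0 a * pderiv 1 b - pderiv 1 a * pderiv 0 b

theorem jacobian_algHom_apply (f : MvPolynomial (Fin 2) R →ₐ[R] MvPolynomial (Fin 2) R)
    (a b : MvPolynomial (Fin 2) R) :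
    jacobian (f a) (f b) = jacobian (f (X 0)) (f (X 1)) * f (jacobian a b) := by
  simp only [jacobian, derivation_algHom_apply _ f a, derivation_algHom_apply _ f b,
    Fin.sum_univ_two, map_sub, map_mul]
  ring

theorem jacobian_X : jacobian (X 0 : MvPolynomial (Fin 2) R) (X 1) = 1 := by
  simp [jacobian, pderiv_X]

theorem isUnit_jacobian (φ : MvPolynomial (Fin 2) R ≃ₐ[R] MvPolynomial (Fin 2) R) :
    IsUnit (jacobian (φ (X 0)) (φ (X 1))) := by
  have := jacobian_algHom_apply φ.toAlgHom (φ.symm (X 0)) (φ.symm (X 1))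
  simp only [AlgEquiv.coe_toAlgHom, AlgEquiv.apply_symm_apply, jacobian_X] at this
  exact .of_mul_eq_one _ this.symm

end ChainRule

variable {K : Type*} [Field K]

/-- The degree in the second variable. -/
noncomputable def degY (p : MvPolynomial (Fin 2) K) : ℕ :=
  ((Polynomial.Bivariate.equivMvPolynomial K).symm p).natDegree

theorem degY_eq_zero_of_isUnit {p : MvPolynomial (Fin 2) K} (h : IsUnit p) : degY p = 0 :=
  Polynomial.natDegree_eq_zero_of_isUnit
    (h.map (Polynomial.Bivariate.equivMvPolynomial K).symm)

/-- The embedding of `K[x,y]` into `K(x)(y)`. -/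
noncomputable def toRatFunc (K : Type*) [Field K] :
    MvPolynomial (Fin 2) K →ₐ[K] RatFunc (RatFunc K) :=
  aeval ![RatFunc.C RatFunc.X, RatFunc.X]

theorem toRatFunc_X₀ : toRatFunc K (X 0) = RatFunc.C (RatFunc.X : RatFunc K) := by simp [toRatFunc]

theorem toRatFunc_X₁ : toRatFunc K (X 1) = (RatFunc.X : RatFunc (RatFunc K)) := by simp [toRatFunc]

theorem toRatFunc_apply (p : MvPolynomial (Fin 2) K) :
    toRatFunc K p = algebraMap _ _ (Polynomial.map (algebraMap K[X] (RatFunc K))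
      ((Polynomial.Bivariate.equivMvPolynomial K).symm p)) := by
  induction p using MvPolynomial.induction_on with
  | C a =>
    rw [toRatFunc, aeval_C, Polynomial.Bivariate.equivMvPolynomial_symm_C, Polynomial.map_C,
      RatFunc.algebraMap_C, RatFunc.algebraMap_C]
    rfl
  | add p q hp hq => rw [map_add, map_add, Polynomial.map_add, map_add, hp, hq]
  | mul_X p n hp =>
    rw [map_mul, map_mul, Polynomial.map_mul, map_mul, hp]
    congr 1
    fin_cases n
    · simp [toRatFunc_X₀]
    · simp [toRatFunc_X₁]

theorem toRatFunc_injective : Function.Injective (toRatFunc K) := fun p q h => by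
  rw [toRatFunc_apply, toRatFunc_apply] at h
  exact (Polynomial.Bivariate.equivMvPolynomial K).symm.injective
    (Polynomial.map_injective _ (RatFunc.algebraMap_injective K) (RatFunc.algebraMap_injective _ h))

theorem intDegree_toRatFunc (p : MvPolynomial (Fin 2) K) : (toRatFunc K p).intDegree = degY p := by
  rw [toRatFunc_apply, RatFunc.intDegree_polynomial,
    Polynomial.natDegree_map_eq_of_injective (RatFunc.algebraMap_injective K), degY]

/-- The degree in `y` on `K(x)(y)`, with the partial derivatives `∂ / ∂x` and `∂ / ∂y`. -/
noncomputable def planeDegree (K : Type*) [Field K] : JacobianDegree K (RatFunc (RatFunc K)) :=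
  ratFuncJacobianDegree
    (fun a ha => by
      by_contra! hc
      exact RatFunc.transcendental_of_ne_C a (fun ⟨c, h⟩ => hc c h.symm) ha)
    (fractionDerivation (RatFunc K) (Polynomial.derivative' (R := K)))

theorem planeDegree_toRatFunc (p : MvPolynomial (Fin 2) K) :
    (planeDegree K).deg (toRatFunc K p) = degY p :=
  intDegree_toRatFunc p

theorem deg_toRatFunc_pos {p : MvPolynomial (Fin 2) K} (hp : 0 < degY p) :
    0 < (planeDegree K).deg (toRatFunc K p) := by
  rw [planeDegree_toRatFunc]
  exact_mod_cast hp

theorem dx_toRatFunc (p : MvPolynomial (Fin 2) K) :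
    (planeDegree K).dx (toRatFunc K p) = toRatFunc K (pderiv 0 p) := by
  have h₀ : (planeDegree K).dx (RatFunc.C (RatFunc.X : RatFunc K)) = 1 := by
    rw [← RatFunc.algebraMap_C, planeDegree, ratFuncJacobianDegree, fractionDerivation_algebraMap,
      coeffDerivation_C, ← RatFunc.algebraMap_X, fractionDerivation_algebraMap]
    simp
  have h₁ : (planeDegree K).dx RatFunc.X = 0 := by
    rw [← RatFunc.algebraMap_X, planeDegree, ratFuncJacobianDegree, fractionDerivation_algebraMap,
      coeffDerivation_X, map_zero]
  rw [derivation_algHom_apply, Fin.sum_univ_two, toRatFunc_X₀, toRatFunc_X₁, h₀, h₁, mul_one,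
    mul_zero, add_zero]

theorem dy_toRatFunc (p : MvPolynomial (Fin 2) K) :
    (planeDegree K).dy (toRatFunc K p) = toRatFunc K (pderiv 1 p) := by
  have h₀ : (planeDegree K).dy (RatFunc.C (RatFunc.X : RatFunc K)) = 0 := by
    rw [← RatFunc.algebraMap_C, planeDegree, ratFuncJacobianDegree, fractionDerivation_algebraMap]
    simp
  have h₁ : (planeDegree K).dy RatFunc.X = 1 := by
    rw [← RatFunc.algebraMap_X, planeDegree, ratFuncJacobianDegree, fractionDerivation_algebraMap]
    simp
  rw [derivation_algHom_apply, Fin.sum_univ_two, toRatFunc_X₀, toRatFunc_X₁, h₀, h₁, mul_one,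
    mul_zero, zero_add]

theorem logJac_toRatFunc (a b : MvPolynomial (Fin 2) K) :
    logJac (planeDegree K).dx (planeDegree K).dy (toRatFunc K a) (toRatFunc K b) =
      toRatFunc K (jacobian a b) / (toRatFunc K a * toRatFunc K b) := by
  simp only [logJac, dx_toRatFunc, dy_toRatFunc, jacobian, map_sub, map_mul]

theorem toRatFunc_algEquiv_X_ne_zero (φ : MvPolynomial (Fin 2) K ≃ₐ[K] MvPolynomial (Fin 2) K)
    (j : Fin 2) : toRatFunc K (φ (X j)) ≠ 0 :=
  (map_ne_zero_iff _ toRatFunc_injective).2 ((map_ne_zero_iff _ φ.injective).2 (X_ne_zero j))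

theorem logJac_toRatFunc_algEquiv (φ : MvPolynomial (Fin 2) K ≃ₐ[K] MvPolynomial (Fin 2) K) :
    logJac (planeDegree K).dx (planeDegree K).dy (toRatFunc K (φ (X 0)))
        (toRatFunc K (φ (X 1))) ≠ 0 ∧
      (planeDegree K).deg (logJac (planeDegree K).dx (planeDegree K).dy (toRatFunc K (φ (X 0)))
        (toRatFunc K (φ (X 1)))) =
        -((planeDegree K).deg (toRatFunc K (φ (X 0))) +
          (planeDegree K).deg (toRatFunc K (φ (X 1)))) := by
  have hJ := isUnit_jacobian φ
  have hJ₀ := (map_ne_zero_iff _ (toRatFunc_injective (K := K))).2 hJ.ne_zero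
  have hφ := toRatFunc_algEquiv_X_ne_zero φ
  rw [logJac_toRatFunc]
  refine ⟨div_ne_zero hJ₀ (mul_ne_zero (hφ 0) (hφ 1)), ?_⟩
  rw [(planeDegree K).isDegree.div hJ₀ (mul_ne_zero (hφ 0) (hφ 1)),
    (planeDegree K).isDegree.mul (hφ 0) (hφ 1), planeDegree_toRatFunc (jacobian _ _),
    degY_eq_zero_of_isUnit hJ, Nat.cast_zero, zero_sub]

theorem degLT_toRatFunc {p : MvPolynomial (Fin 2) K} {n : ℕ} (hn : 0 < n) :
    DegLT (planeDegree K).deg (toRatFunc K p) n → degY p < n := by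
  rintro (h | h)
  · rw [map_eq_zero_iff _ toRatFunc_injective] at h
    rwa [h, degY, map_zero, Polynomial.natDegree_zero]
  · exact_mod_cast (planeDegree_toRatFunc p).symm.trans_lt h

/-- The exponents of a polynomial in two variables and their coefficients, as an argument of
`laurentEval`. -/
noncomputable def exponents (p : MvPolynomial (Fin 2) K) : ℤ × ℕ →₀ K :=
  ∑ s ∈ p.support, Finsupp.single ((s 0 : ℤ), s 1) (coeff s p)

theorem exponents_apply (p : MvPolynomial (Fin 2) K) (s : Fin 2 →₀ ℕ) :
    exponents p ((s 0 : ℤ), s 1) = coeff s p := by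
  have hinj : ∀ t : Fin 2 →₀ ℕ, ((t 0 : ℤ), t 1) = ((s 0 : ℤ), s 1) ↔ t = s := fun t => by
    rw [Prod.mk.injEq, Nat.cast_inj, Finsupp.ext_iff, Fin.forall_fin_two]
  simp only [exponents, Finsupp.finsetSum_apply, Finsupp.single_apply, hinj, Finset.sum_ite_eq',
    mem_support_iff]
  split_ifs with hs
  exacts [rfl, (notMem_support_iff.1 hs).symm]

theorem nonneg_of_mem_support_exponents {p : MvPolynomial (Fin 2) K} {x : ℤ × ℕ}
    (hx : x ∈ (exponents p).support) : 0 ≤ x.1 := by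
  obtain ⟨s, -, hs⟩ := Finset.mem_biUnion.1 (Finsupp.support_finsetSum hx)
  rw [Finset.mem_singleton.1 (Finsupp.support_single_subset hs)]
  exact Nat.cast_nonneg _

theorem laurentEval_exponents {A : Type*} [Field A] [Algebra K A]
    (f : MvPolynomial (Fin 2) K →ₐ[K] A) (p : MvPolynomial (Fin 2) K) :
    laurentEval (f (X 0)) (f (X 1)) (exponents p) = f p := by
  conv_rhs => rw [aeval_unique f, aeval_def, eval₂_eq']
  rw [exponents, map_sum]
  refine Finset.sum_congr rfl fun s _ => ?_
  rw [laurentEval, Finsupp.linearCombination_single, zpow_natCast, Algebra.smul_def,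
    Fin.prod_univ_two]
  rfl

theorem exists_ne_zero_mem_support_exponents {p : MvPolynomial (Fin 2) K} (hp : p.totalDegree ≠ 0) :
    ∃ x ∈ (exponents p).support, x ≠ 0 := by
  rw [Ne, totalDegree_eq_zero_iff] at hp
  push Not at hp
  obtain ⟨s, hs, i, hi⟩ := hp
  refine ⟨((s 0 : ℤ), s 1), ?_, fun h => hi ?_⟩
  · rwa [Finsupp.mem_support_iff, exponents_apply, ← mem_support_iff]
  · rw [Prod.mk_eq_zero, Nat.cast_eq_zero] at h
    fin_cases i
    exacts [h.1, h.2]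

theorem totalDegree_algEquiv_symm_X_ne_zero {σ : Type*}
    (φ : MvPolynomial σ K ≃ₐ[K] MvPolynomial σ K) (i : σ) : (φ.symm (X i)).totalDegree ≠ 0 := by
  intro h
  have hX := φ.apply_symm_apply (X i)
  rw [totalDegree_eq_zero_iff_eq_C.1 h, ← algebraMap_eq, AlgEquiv.commutes, algebraMap_eq] at hX
  simpa using congrArg totalDegree hX

/-- If both components of an automorphism involve `y`, then expressing `x` as a polynomial in them
forces a cancellation of their leading parts. -/
theorem exists_degY_lt (φ : MvPolynomial (Fin 2) K ≃ₐ[K] MvPolynomial (Fin 2) K)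
    (h₀ : 0 < degY (φ (X 0))) (h₁ : 0 < degY (φ (X 1))) :
    (∃ (κ : K) (k : ℕ), degY (φ (X 0) - C κ * φ (X 1) ^ k) < degY (φ (X 0))) ∨
    (∃ (κ : K) (k : ℕ), degY (φ (X 1) - C κ * φ (X 0) ^ k) < degY (φ (X 1))) := by
  obtain ⟨hJ, hJdeg⟩ := logJac_toRatFunc_algEquiv φ
  have hX : laurentEval (toRatFunc K (φ (X 0))) (toRatFunc K (φ (X 1)))
      (exponents (φ.symm (X 0))) = RatFunc.C (RatFunc.X : RatFunc K) := by
    have := laurentEval_exponents ((toRatFunc K).comp φ.toAlgHom) (φ.symm (X 0))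
    simpa only [AlgHom.comp_apply, AlgEquiv.coe_toAlgHom, AlgEquiv.apply_symm_apply,
      toRatFunc_X₀] using this
  have hC : DegLT (planeDegree K).deg (RatFunc.C (RatFunc.X : RatFunc K)) 1 :=
    Or.inr ((RatFunc.intDegree_C _).trans_lt one_pos)
  have hreduce := (planeDegree K).exists_degLT_sub_pow_of_laurentEval
    (toRatFunc_algEquiv_X_ne_zero φ 0) (toRatFunc_algEquiv_X_ne_zero φ 1)
    (deg_toRatFunc_pos h₀) (deg_toRatFunc_pos h₁) hJ hJdeg
    (fun _ => nonneg_of_mem_support_exponents)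
    (exists_ne_zero_mem_support_exponents (totalDegree_algEquiv_symm_X_ne_zero φ 0))
    (hX.symm ▸ hC)
  have hmap : ∀ (p q : MvPolynomial (Fin 2) K) (κ : K) (k : ℕ), toRatFunc K p -
      algebraMap K _ κ * toRatFunc K q ^ k = toRatFunc K (p - C κ * q ^ k) := fun p q κ k => by
    rw [map_sub, map_mul, map_pow, ← algebraMap_eq, AlgHom.commutes]
  simp only [hmap, planeDegree_toRatFunc] at hreduce
  exact hreduce.imp (fun ⟨κ, k, h⟩ => ⟨κ, k, degLT_toRatFunc h₀ h⟩)
    fun ⟨κ, k, h⟩ => ⟨κ, k, degLT_toRatFunc h₁ h⟩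

/-! ### Affine maps and shears -/

section CommRing

variable {R : Type*} [CommRing R]

@[simp]
theorem alphaHom_X₀ (a : R) : alphaHom a (X 0) = X 1 := by simp [alphaHom]

@[simp]
theorem alphaHom_X₁ (a : R) : alphaHom a (X 1) = X 0 + C a * X 1 := by simp [alphaHom]

@[simp]
theorem betaHom_X₀ (h : R[X]) : betaHom h (X 0) = X 0 + Polynomial.aeval (X 1) h := by
  simp [betaHom]

@[simp]
theorem betaHom_X₁ (h : R[X]) : betaHom h (X 1) = X 1 := by simp [betaHom]

theorem lamOf_X₀ (t : Aff R) :
    lamOf t (X 0) = C t.1.1.1 * X 0 + C t.1.1.2.1 * X 1 + C t.1.1.2.2 := by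
  simp [lamOf]

theorem lamOf_X₁ (t : Aff R) :
    lamOf t (X 1) = C t.1.2.1 * X 0 + C t.1.2.2.1 * X 1 + C t.1.2.2.2 := by
  simp [lamOf]

theorem betaHom_comp_betaHom (h k : R[X]) :
    (betaHom h).comp (betaHom k) = betaHom (h + k) :=
  algHom_ext_fin_two (by simp [← Polynomial.aeval_algHom_apply, add_assoc]) (by simp)

theorem betaHom_zero : betaHom (0 : R[X]) = AlgHom.id R _ :=
  algHom_ext_fin_two (by simp) (by simp)

/-- The shear `(x + h(y), y)` as an automorphism. -/
noncomputable def betaEquiv (h : R[X]) : MvPolynomial (Fin 2) R ≃ₐ[R] MvPolynomial (Fin 2) R :=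
  .ofAlgHom (betaHom h) (betaHom (-h))
    (by rw [betaHom_comp_betaHom, add_neg_cancel, betaHom_zero])
    (by rw [betaHom_comp_betaHom, neg_add_cancel, betaHom_zero])

@[simp]
theorem betaEquiv_apply (h : R[X]) (p : MvPolynomial (Fin 2) R) : betaEquiv h p = betaHom h p :=
  rfl

theorem eq_of_affine_eq {a b c a' b' c' : R}
    (h : (C a * X 0 + C b * X 1 + C c : MvPolynomial (Fin 2) R) =
      C a' * X 0 + C b' * X 1 + C c') : (a, b, c) = (a', b', c') := by
  have hc : c = c' := by simpa using congrArg (eval ![0, 0]) h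
  subst hc
  have ha : a = a' := by simpa using congrArg (eval ![1, 0]) h
  have hb : b = b' := by simpa using congrArg (eval ![0, 1]) h
  rw [ha, hb]

theorem lamOf_injective : Function.Injective (lamOf : Aff R → _) := fun t t' h => by
  have h₀ := DFunLike.congr_fun h (X 0)
  have h₁ := DFunLike.congr_fun h (X 1)
  rw [lamOf_X₀, lamOf_X₀] at h₀
  rw [lamOf_X₁, lamOf_X₁] at h₁
  exact Subtype.ext (Prod.ext (eq_of_affine_eq h₀) (eq_of_affine_eq h₁))

/-- The affine automorphism `(a₁x + b₁y + c₁, a₂x + b₂y + c₂)`, given by its coefficients. -/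
def mkAff (a₁ b₁ c₁ a₂ b₂ c₂ : R) (h : a₁ * b₂ ≠ a₂ * b₁) : Aff R :=
  ⟨((a₁, b₁, c₁), (a₂, b₂, c₂)), h⟩

@[simp]
theorem lamOf_mkAff_X₀ {a₁ b₁ c₁ a₂ b₂ c₂ : R} (h : a₁ * b₂ ≠ a₂ * b₁) :
    lamOf (mkAff a₁ b₁ c₁ a₂ b₂ c₂ h) (X 0) = C a₁ * X 0 + C b₁ * X 1 + C c₁ :=
  lamOf_X₀ _

@[simp]
theorem lamOf_mkAff_X₁ {a₁ b₁ c₁ a₂ b₂ c₂ : R} (h : a₁ * b₂ ≠ a₂ * b₁) :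
    lamOf (mkAff a₁ b₁ c₁ a₂ b₂ c₂ h) (X 1) = C a₂ * X 0 + C b₂ * X 1 + C c₂ :=
  lamOf_X₁ _

theorem exists_eq_mkAff (t : Aff R) :
    ∃ (a₁ b₁ c₁ a₂ b₂ c₂ : R) (h : a₁ * b₂ ≠ a₂ * b₁), t = mkAff a₁ b₁ c₁ a₂ b₂ c₂ h :=
  ⟨_, _, _, _, _, _, t.2, rfl⟩

instance [Nontrivial R] : One (Aff R) :=
  ⟨mkAff 1 0 0 0 1 0 (by simp)⟩

theorem lamOf_one [Nontrivial R] : lamOf (1 : Aff R) = AlgHom.id R _ :=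
  algHom_ext_fin_two ((lamOf_mkAff_X₀ _).trans (by simp)) ((lamOf_mkAff_X₁ _).trans (by simp))

/-- Composition of affine maps; the first factor is substituted into the second one because a pair
of polynomials acts contravariantly on `K[x,y]`. -/
instance [IsDomain R] : Mul (Aff R) where
  mul t t' :=
    mkAff (t'.1.1.1 * t.1.1.1 + t'.1.1.2.1 * t.1.2.1)
      (t'.1.1.1 * t.1.1.2.1 + t'.1.1.2.1 * t.1.2.2.1)
      (t'.1.1.1 * t.1.1.2.2 + t'.1.1.2.1 * t.1.2.2.2 + t'.1.1.2.2)
      (t'.1.2.1 * t.1.1.1 + t'.1.2.2.1 * t.1.2.1)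
      (t'.1.2.1 * t.1.1.2.1 + t'.1.2.2.1 * t.1.2.2.1)
      (t'.1.2.1 * t.1.1.2.2 + t'.1.2.2.1 * t.1.2.2.2 + t'.1.2.2.2)
      fun h => mul_ne_zero (sub_ne_zero.2 t.2) (sub_ne_zero.2 t'.2) (by linear_combination h)

theorem lamOf_mul [IsDomain R] (t t' : Aff R) : lamOf (t * t') = (lamOf t).comp (lamOf t') :=
  algHom_ext_fin_two
    ((lamOf_mkAff_X₀ _).trans <| by
      simp only [lamOf_X₀, lamOf_X₁, AlgHom.comp_apply, map_add, map_mul, algHom_C, algebraMap_eq]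
      ring)
    ((lamOf_mkAff_X₁ _).trans <| by
      simp only [lamOf_X₀, lamOf_X₁, AlgHom.comp_apply, map_add, map_mul, algHom_C, algebraMap_eq]
      ring)

theorem algEquiv_ext_fin_two {A : Type*} [CommRing A] [Algebra R A]
    {φ ψ : MvPolynomial (Fin 2) R ≃ₐ[R] A} (h₀ : φ (X 0) = ψ (X 0)) (h₁ : φ (X 1) = ψ (X 1)) :
    φ = ψ :=
  AlgEquiv.coe_toAlgHom_injective (algHom_ext_fin_two h₀ h₁)

end CommRing

variable {K : Type*} [Field K]

instance : Inv (Aff K) where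
  inv t :=
    let d := t.1.1.1 * t.1.2.2.1 - t.1.2.1 * t.1.1.2.1
    mkAff (d⁻¹ * t.1.2.2.1) (-(d⁻¹ * t.1.1.2.1))
      (d⁻¹ * (t.1.1.2.1 * t.1.2.2.2 - t.1.2.2.1 * t.1.1.2.2))
      (-(d⁻¹ * t.1.2.1)) (d⁻¹ * t.1.1.1)
      (d⁻¹ * (t.1.2.1 * t.1.1.2.2 - t.1.1.1 * t.1.2.2.2)) fun h => by
        have hd : d ≠ 0 := sub_ne_zero.2 t.2
        refine inv_ne_zero hd ?_
        linear_combination h - d⁻¹ * inv_mul_cancel₀ hd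

theorem aff_inv_mul_cancel (t : Aff K) : t⁻¹ * t = 1 := by
  obtain ⟨a₁, b₁, c₁, a₂, b₂, c₂, ht, rfl⟩ := exists_eq_mkAff t
  let e := (a₁ * b₂ - a₂ * b₁)⁻¹
  have he : e * (a₁ * b₂ - a₂ * b₁) = 1 := inv_mul_cancel₀ (sub_ne_zero.2 ht)
  refine Subtype.ext (Prod.ext (Prod.ext ?_ (Prod.ext ?_ ?_)) (Prod.ext ?_ (Prod.ext ?_ ?_)))
  · change a₁ * (e * b₂) + b₁ * -(e * a₂) = 1
    linear_combination he
  · change a₁ * -(e * b₁) + b₁ * (e * a₁) = 0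
    ring
  · change a₁ * (e * (b₁ * c₂ - b₂ * c₁)) + b₁ * (e * (a₂ * c₁ - a₁ * c₂)) + c₁ = 0
    linear_combination -c₁ * he
  · change a₂ * (e * b₂) + b₂ * -(e * a₂) = 0
    ring
  · change a₂ * -(e * b₁) + b₂ * (e * a₁) = 1
    linear_combination he
  · change a₂ * (e * (b₁ * c₂ - b₂ * c₁)) + b₂ * (e * (a₂ * c₁ - a₁ * c₂)) + c₂ = 0
    linear_combination -c₂ * he

noncomputable instance : Group (Aff K) :=
  .ofLeftAxioms (fun _ _ _ => lamOf_injective <| by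
      rw [lamOf_mul, lamOf_mul, lamOf_mul, lamOf_mul, AlgHom.comp_assoc])
    (fun _ => lamOf_injective <| by rw [lamOf_mul, lamOf_one, AlgHom.id_comp])
    aff_inv_mul_cancel

/-- The automorphism `(a₁x + b₁y + c₁, a₂x + b₂y + c₂)`. -/
noncomputable def affEquiv (t : Aff K) : MvPolynomial (Fin 2) K ≃ₐ[K] MvPolynomial (Fin 2) K :=
  .ofAlgHom (lamOf t) (lamOf t⁻¹) (by rw [← lamOf_mul, mul_inv_cancel, lamOf_one])
    (by rw [← lamOf_mul, inv_mul_cancel, lamOf_one])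

@[simp]
theorem affEquiv_apply (t : Aff K) (p : MvPolynomial (Fin 2) K) : affEquiv t p = lamOf t p :=
  rfl

/-! ### Affine maps and shears generate -/

section TotalDegree

variable {σ R : Type*} [CommRing R] [IsDomain R]

theorem totalDegree_pow_of_isDomain (p : MvPolynomial σ R) (n : ℕ) :
    (p ^ n).totalDegree = n * p.totalDegree := by
  rcases eq_or_ne p 0 with rfl | hp
  · rcases eq_or_ne n 0 with rfl | hn <;> simp [*]
  · induction n with
    | zero => simp
    | succ n ih => rw [pow_succ, totalDegree_mul_of_isDomain (pow_ne_zero n hp) hp, ih, add_one_mul]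

theorem totalDegree_C_mul {a : R} (ha : a ≠ 0) (p : MvPolynomial σ R) :
    (C a * p).totalDegree = p.totalDegree := by
  rcases eq_or_ne p 0 with rfl | hp
  · rw [mul_zero]
  · rw [totalDegree_mul_of_isDomain (C_ne_zero.2 ha) hp, totalDegree_C, zero_add]

theorem totalDegree_polynomial_aeval (p : MvPolynomial σ R) (q : R[X]) :
    (Polynomial.aeval p q).totalDegree = q.natDegree * p.totalDegree := by
  rcases Nat.eq_zero_or_pos q.natDegree with hq | hq
  · rw [Polynomial.eq_C_of_natDegree_eq_zero hq, Polynomial.aeval_C, algebraMap_eq, totalDegree_C,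
      Polynomial.natDegree_C, zero_mul]
  rcases Nat.eq_zero_or_pos p.totalDegree with hp | hp
  · rw [totalDegree_eq_zero_iff_eq_C.1 hp, ← algebraMap_eq, Polynomial.aeval_algebraMap_apply,
      algebraMap_eq, totalDegree_C, totalDegree_C, mul_zero]
  have hlead : (C q.leadingCoeff * p ^ q.natDegree).totalDegree = q.natDegree * p.totalDegree := by
    rw [totalDegree_C_mul (Polynomial.leadingCoeff_ne_zero.2
      (Polynomial.ne_zero_of_natDegree_gt hq)), totalDegree_pow_of_isDomain]
  have hlow : (∑ i ∈ Finset.range q.natDegree, C (q.coeff i) * p ^ i).totalDegree <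
      (C q.leadingCoeff * p ^ q.natDegree).totalDegree := by
    refine (totalDegree_finsetSum_le (d := (q.natDegree - 1) * p.totalDegree)
      fun i hi => ?_).trans_lt (by rw [hlead]; exact Nat.mul_lt_mul_of_pos_right (by omega) hp)
    calc _ ≤ (C (q.coeff i) : MvPolynomial σ R).totalDegree + (p ^ i).totalDegree :=
          totalDegree_mul _ _
      _ = i * p.totalDegree := by rw [totalDegree_C, zero_add, totalDegree_pow_of_isDomain]
      _ ≤ _ := Nat.mul_le_mul_right _ (Nat.le_sub_one_of_lt (Finset.mem_range.1 hi))
  rw [Polynomial.aeval_eq_sum_range, Finset.sum_range_succ]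
  simp only [← C_mul', Polynomial.coeff_natDegree]
  rw [totalDegree_add_eq_right_of_totalDegree_lt hlow, hlead]

end TotalDegree

theorem equivMvPolynomial_C {R : Type*} [CommSemiring R] (q : R[X]) :
    Polynomial.Bivariate.equivMvPolynomial R (Polynomial.C q) = Polynomial.aeval (X 0) q := by
  induction q using Polynomial.induction_on' with
  | add p q hp hq => rw [Polynomial.C_add, map_add, map_add, hp, hq]
  | monomial n a => simp [← Polynomial.C_mul_X_pow_eq_monomial, algebraMap_eq]

variable {K : Type*} [Field K]

theorem exists_eq_aeval_of_degY_eq_zero {p : MvPolynomial (Fin 2) K} (hp : degY p = 0) :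
    ∃ q : K[X], p = Polynomial.aeval (X 0) q :=
  ⟨_, by rw [← equivMvPolynomial_C, ← Polynomial.eq_C_of_natDegree_eq_zero hp,
    AlgEquiv.apply_symm_apply]⟩

theorem exists_linear_of_degY_eq_zero
    (φ : MvPolynomial (Fin 2) K ≃ₐ[K] MvPolynomial (Fin 2) K) (h₀ : degY (φ (X 0)) = 0) :
    ∃ a b : K, a ≠ 0 ∧ φ (X 0) = C a * X 0 + C b := by
  obtain ⟨q, hq⟩ := exists_eq_aeval_of_degY_eq_zero h₀
  have hX : Polynomial.aeval (φ.symm (X 0)) q = X 0 := by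
    rw [Polynomial.aeval_algHom_apply, ← hq, AlgEquiv.symm_apply_apply]
  have hdeg : q.natDegree = 1 := by
    have := congrArg totalDegree hX
    rw [totalDegree_polynomial_aeval, totalDegree_X] at this
    exact Nat.eq_one_of_mul_eq_one_right this
  obtain ⟨a, ha, b, rfl⟩ := Polynomial.natDegree_eq_one.1 hdeg
  exact ⟨a, b, ha, by simpa [algebraMap_eq] using hq⟩

theorem equivMvPolynomial_symm_eq_comp {R : Type*} [CommRing R]
    (f : MvPolynomial (Fin 2) R →ₐ[R] MvPolynomial (Fin 2) R) (h₀ : f (X 0) = X 0)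
    (p : MvPolynomial (Fin 2) R) :
    (Polynomial.Bivariate.equivMvPolynomial R).symm (f p) =
      ((Polynomial.Bivariate.equivMvPolynomial R).symm p).comp
        ((Polynomial.Bivariate.equivMvPolynomial R).symm (f (X 1))) := by
  induction p using MvPolynomial.induction_on with
  | C a => simp [algHom_C, algebraMap_eq]
  | add p q hp hq => simp only [map_add, Polynomial.add_comp, hp, hq]
  | mul_X p j hp =>
    rw [map_mul, map_mul, map_mul, Polynomial.mul_comp, hp]
    congr 1
    fin_cases j <;> simp [h₀]

/-- An automorphism fixing `x` is an automorphism of `K[x][y]` over `K[x]`. -/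
theorem exists_triangular_of_map_X₀ (φ : MvPolynomial (Fin 2) K ≃ₐ[K] MvPolynomial (Fin 2) K)
    (h₀ : φ (X 0) = X 0) :
    ∃ (u : K) (γ : K[X]), u ≠ 0 ∧ φ (X 1) = C u * X 1 + Polynomial.aeval (X 0) γ := by
  let e := (Polynomial.Bivariate.equivMvPolynomial K).symm
  have hcomp : (e (φ.symm (X 1))).comp (e (φ (X 1))) = Polynomial.X := by
    have := equivMvPolynomial_symm_eq_comp φ.toAlgHom h₀ (φ.symm (X 1))
    rw [AlgEquiv.coe_toAlgHom, AlgEquiv.apply_symm_apply] at this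
    exact this.symm.trans Polynomial.Bivariate.equivMvPolynomial_symm_X_1
  have hdeg : (e (φ.symm (X 1))).natDegree * (e (φ (X 1))).natDegree = 1 := by
    rw [← Polynomial.natDegree_comp, hcomp, Polynomial.natDegree_X]
  obtain ⟨v, hv, γ, hγ⟩ := Polynomial.natDegree_eq_one.1 (Nat.eq_one_of_mul_eq_one_left hdeg)
  have hunit : IsUnit v := by
    have := congrArg Polynomial.leadingCoeff hcomp
    rw [← hγ,
      Polynomial.leadingCoeff_comp (by rw [Polynomial.natDegree_linear hv]; exact one_ne_zero),
      Polynomial.leadingCoeff_X, Nat.eq_one_of_mul_eq_one_right hdeg, pow_one,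
      Polynomial.leadingCoeff_linear hv] at this
    exact .of_mul_eq_one_right _ this
  obtain ⟨u, hu, rfl⟩ := Polynomial.isUnit_iff.1 hunit
  refine ⟨u, γ, hu.ne_zero, ?_⟩
  have hφ := (AlgEquiv.symm_apply_eq (Polynomial.Bivariate.equivMvPolynomial K)).1 hγ.symm
  rw [hφ]
  simp [equivMvPolynomial_C, algebraMap_eq]

/-- The automorphisms generated by affine maps and shears. -/
noncomputable def tameSubgroup (K : Type*) [Field K] :
    Subgroup (MvPolynomial (Fin 2) K ≃ₐ[K] MvPolynomial (Fin 2) K) :=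
  Subgroup.closure (Set.range affEquiv ∪ Set.range betaEquiv)

theorem affEquiv_mem_tameSubgroup (t : Aff K) : affEquiv t ∈ tameSubgroup K :=
  Subgroup.subset_closure (.inl ⟨t, rfl⟩)

theorem betaEquiv_mem_tameSubgroup (h : K[X]) : betaEquiv h ∈ tameSubgroup K :=
  Subgroup.subset_closure (.inr ⟨h, rfl⟩)

theorem mem_tameSubgroup_of_map_X₀ {φ : MvPolynomial (Fin 2) K ≃ₐ[K] MvPolynomial (Fin 2) K}
    (h₀ : φ (X 0) = X 0) : φ ∈ tameSubgroup K := by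
  obtain ⟨u, γ, hu, h₁⟩ := exists_triangular_of_map_X₀ φ h₀
  have hφ : φ = affEquiv (mkAff 0 u 0 1 0 0 (by simpa using hu.symm)) * betaEquiv γ *
      affEquiv (mkAff 0 1 0 1 0 0 (by simp)) :=
    algEquiv_ext_fin_two (by simp [h₀]) (by simp [h₁, ← Polynomial.aeval_algHom_apply])
  rw [hφ]
  exact mul_mem (mul_mem (affEquiv_mem_tameSubgroup _) (betaEquiv_mem_tameSubgroup γ))
    (affEquiv_mem_tameSubgroup _)

theorem mem_tameSubgroup_of_degY_eq_zero
    {φ : MvPolynomial (Fin 2) K ≃ₐ[K] MvPolynomial (Fin 2) K} (h₀ : degY (φ (X 0)) = 0) :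
    φ ∈ tameSubgroup K := by
  obtain ⟨a, b, ha, hab⟩ := exists_linear_of_degY_eq_zero φ h₀
  let t : Aff K := mkAff a 0 b 0 1 0 (by simpa using ha)
  have hψ : ((affEquiv t)⁻¹ * φ) (X 0) = X 0 := by
    rw [AlgEquiv.mul_apply, hab, AlgEquiv.aut_inv, AlgEquiv.symm_apply_eq]
    simp [t]
  simpa using mul_mem (affEquiv_mem_tameSubgroup t) (mem_tameSubgroup_of_map_X₀ hψ)

theorem tameSubgroup_eq_top : tameSubgroup K = ⊤ := by
  let swap : MvPolynomial (Fin 2) K ≃ₐ[K] MvPolynomial (Fin 2) K :=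
    affEquiv (mkAff 0 1 0 1 0 0 (by simp))
  have swap_mem : swap ∈ tameSubgroup K := affEquiv_mem_tameSubgroup _
  have mul_swap_X₀ (φ) : (φ * swap) (X 0) = φ (X 1) := by simp [swap]
  have mul_swap_X₁ (φ) : (φ * swap) (X 1) = φ (X 0) := by simp [swap]
  refine (Subgroup.eq_top_iff' _).2 fun φ => ?_
  induction hn : degY (φ (X 0)) + degY (φ (X 1)) using Nat.strong_induction_on generalizing φ with
  | _ n ih =>
    have of_degY_lt (φ : MvPolynomial (Fin 2) K ≃ₐ[K] MvPolynomial (Fin 2) K) (κ : K) (k : ℕ)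
        (hn : degY (φ (X 0)) + degY (φ (X 1)) = n)
        (hlt : degY (φ (X 0) - C κ * φ (X 1) ^ k) < degY (φ (X 0))) : φ ∈ tameSubgroup K := by
      let β := betaEquiv (-(Polynomial.C κ * Polynomial.X ^ k))
      have hκ : φ (C κ) = C κ := φ.commutes κ
      have h₀ : (φ * β) (X 0) = φ (X 0) - C κ * φ (X 1) ^ k := by
        simp [β, sub_eq_add_neg, algebraMap_eq, hκ]
      have h₁ : (φ * β) (X 1) = φ (X 1) := by simp [β]
      refine (mul_mem_cancel_right (betaEquiv_mem_tameSubgroup _)).1 (ih _ ?_ (φ * β) rfl)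
      rw [h₀, h₁]
      omega
    rcases Nat.eq_zero_or_pos (degY (φ (X 0))) with h₀ | h₀
    · exact mem_tameSubgroup_of_degY_eq_zero h₀
    rcases Nat.eq_zero_or_pos (degY (φ (X 1))) with h₁ | h₁
    · refine (mul_mem_cancel_right swap_mem).1 (mem_tameSubgroup_of_degY_eq_zero ?_)
      rw [mul_swap_X₀, h₁]
    rcases exists_degY_lt φ h₀ h₁ with ⟨κ, k, h⟩ | ⟨κ, k, h⟩
    · exact of_degY_lt φ κ k hn h
    · refine (mul_mem_cancel_right swap_mem).1 (of_degY_lt _ κ k ?_ ?_)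
      · rw [mul_swap_X₀, mul_swap_X₁, add_comm, hn]
      · rwa [mul_swap_X₀, mul_swap_X₁]

/-! ### Existence of the normal form -/

section CommRing

variable {R : Type*} [CommRing R]

theorem alphaHom_eq_lamOf [Nontrivial R] (a : R) :
    alphaHom a = lamOf (mkAff 0 1 0 1 a 0 (by simp)) :=
  algHom_ext_fin_two (by simp) (by simp)

theorem alphaOpt_none : alphaOpt (none : Option R) = AlgHom.id R _ := rfl

theorem alphaOpt_some (a : R) : alphaOpt (some a) = alphaHom a := rfl

theorem X_sq_dvd_iff {h : R[X]} : Polynomial.X ^ 2 ∣ h ↔ h.coeff 0 = 0 ∧ h.coeff 1 = 0 := by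
  rw [Polynomial.X_pow_dvd_iff]
  exact ⟨fun H => ⟨H 0 two_pos, H 1 one_lt_two⟩, fun H d hd => by
    interval_cases d
    exacts [H.1, H.2]⟩

theorem X_sq_dvd_val (h : H R) : Polynomial.X ^ 2 ∣ h.1 :=
  X_sq_dvd_iff.2 h.2.2

theorem eq_affine_add_X_sq_mul (h : R[X]) :
    h = Polynomial.C (h.coeff 0) + Polynomial.C (h.coeff 1) * Polynomial.X +
      Polynomial.X ^ 2 * h.divX.divX := by
  have h₀ := h.divX_mul_X_add
  have h₁ := h.divX.divX_mul_X_add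
  rw [Polynomial.coeff_divX] at h₁
  linear_combination -h₀ - Polynomial.X * h₁

/-- The composition `α₂∘β₂∘⋯∘α_k∘β_k∘f`. -/
noncomputable def restHom (rest : List (R × H R))
    (f : MvPolynomial (Fin 2) R →ₐ[R] MvPolynomial (Fin 2) R) :
    MvPolynomial (Fin 2) R →ₐ[R] MvPolynomial (Fin 2) R :=
  rest.foldr (fun p acc => (alphaHom p.1).comp ((betaHom p.2.1).comp acc)) f

theorem restHom_cons (p : R × H R) (rest : List (R × H R))
    (f : MvPolynomial (Fin 2) R →ₐ[R] MvPolynomial (Fin 2) R) :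
    restHom (p :: rest) f = (alphaHom p.1).comp ((betaHom p.2.1).comp (restHom rest f)) :=
  rfl

theorem restHom_comp (rest : List (R × H R))
    (f g : MvPolynomial (Fin 2) R →ₐ[R] MvPolynomial (Fin 2) R) :
    restHom rest (f.comp g) = (restHom rest f).comp g := by
  induction rest with
  | nil => rfl
  | cons p rest ih => rw [restHom_cons, ih, restHom_cons, AlgHom.comp_assoc, AlgHom.comp_assoc]

theorem restHom_append (rest rest' : List (R × H R))
    (f : MvPolynomial (Fin 2) R →ₐ[R] MvPolynomial (Fin 2) R) :
    restHom (rest ++ rest') f = restHom rest (restHom rest' f) :=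
  List.foldr_append

/-- The words `α₁∘β₁∘⋯∘α_k∘β_k`, as encoded in `DecompData`. -/
abbrev Word (R : Type*) [CommRing R] := Option (Option R × H R × List (R × H R))

/-- The composition `α₁∘β₁∘⋯∘α_k∘β_k`. -/
noncomputable def reducedHom : Word R → (MvPolynomial (Fin 2) R →ₐ[R] MvPolynomial (Fin 2) R)
  | none => AlgHom.id R _
  | some (oa, h, rest) => (alphaOpt oa).comp ((betaHom h.1).comp (restHom rest (AlgHom.id R _)))

theorem reducedHom_none : reducedHom (none : Word R) = AlgHom.id R _ := rfl

theorem reducedHom_some (oa : Option R) (h : H R) (rest : List (R × H R)) :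
    reducedHom (some (oa, h, rest)) =
      (alphaOpt oa).comp ((betaHom h.1).comp (restHom rest (AlgHom.id R _))) :=
  rfl

theorem reducedHom_nil (oa : Option R) (h : H R) :
    reducedHom (some (oa, h, [])) = (alphaOpt oa).comp (betaHom h.1) :=
  rfl

theorem reducedHom_concat (oa : Option R) (h : H R) (rest : List (R × H R)) (a : R) (k : H R) :
    reducedHom (some (oa, h, rest ++ [(a, k)])) =
      (reducedHom (some (oa, h, rest))).comp ((alphaHom a).comp (betaHom k.1)) := by
  rw [reducedHom_some, reducedHom_some, restHom_append, AlgHom.comp_assoc, AlgHom.comp_assoc,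
    ← restHom_comp, AlgHom.id_comp]
  rfl

theorem wordHom_mk (w : Word R) (t : Aff R) : wordHom (w, t) = (reducedHom w).comp (lamOf t) := by
  match w with
  | none => rfl
  | some (oa, h, rest) =>
    rw [reducedHom_some, AlgHom.comp_assoc, AlgHom.comp_assoc, ← restHom_comp, AlgHom.id_comp]
    rfl

/-- The maps of the form `α₁∘β₁∘⋯∘α_k∘β_k∘λ`. -/
def IsWord (φ : MvPolynomial (Fin 2) R →ₐ[R] MvPolynomial (Fin 2) R) : Prop :=
  ∃ w t, φ = (reducedHom w).comp (lamOf t)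

theorem isWord_reducedHom [Nontrivial R] (w : Word R) : IsWord (reducedHom w) :=
  ⟨w, 1, by rw [lamOf_one, AlgHom.comp_id]⟩

variable [IsDomain R]

theorem IsWord.comp_lamOf {φ : MvPolynomial (Fin 2) R →ₐ[R] MvPolynomial (Fin 2) R}
    (hφ : IsWord φ) (t : Aff R) : IsWord (φ.comp (lamOf t)) := by
  obtain ⟨w, t', rfl⟩ := hφ
  exact ⟨w, t' * t, by rw [AlgHom.comp_assoc, lamOf_mul]⟩

theorem isWord_reducedHom_comp_alphaHom_comp_betaHom (w : Word R) (a : R) {h : R[X]}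
    (hh : Polynomial.X ^ 2 ∣ h) :
    IsWord ((reducedHom w).comp ((alphaHom a).comp (betaHom h))) := by
  by_cases h₀ : h = 0
  · rw [h₀, betaHom_zero, AlgHom.comp_id, alphaHom_eq_lamOf]
    exact (isWord_reducedHom w).comp_lamOf _
  obtain ⟨k, rfl⟩ : ∃ k : H R, k.1 = h := ⟨⟨h, h₀, X_sq_dvd_iff.1 hh⟩, rfl⟩
  match w with
  | none =>
    rw [reducedHom_none, AlgHom.id_comp, ← alphaOpt_some, ← reducedHom_nil]
    exact isWord_reducedHom _
  | some (oa, l, rest) =>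
    rw [← reducedHom_concat]
    exact isWord_reducedHom _

theorem isWord_betaHom {h : R[X]} (hh : Polynomial.X ^ 2 ∣ h) : IsWord (betaHom h) := by
  by_cases h₀ : h = 0
  · rw [h₀, betaHom_zero]
    exact isWord_reducedHom none
  · exact isWord_reducedHom (some (none, ⟨h, h₀, X_sq_dvd_iff.1 hh⟩, []))

theorem isWord_reducedHom_comp_betaHom (w : Word R) {h : R[X]} (hh : Polynomial.X ^ 2 ∣ h) :
    IsWord ((reducedHom w).comp (betaHom h)) := by
  match w with
  | none => exact isWord_betaHom hh
  | some (oa, k, rest) =>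
    rcases List.eq_nil_or_concat rest with rfl | ⟨r, ⟨a, l⟩, rfl⟩
    · have hkh := dvd_add (X_sq_dvd_val k) hh
      rw [reducedHom_nil, AlgHom.comp_assoc, betaHom_comp_betaHom]
      match oa with
      | none => exact isWord_betaHom hkh
      | some a =>
        rw [alphaOpt_some, ← AlgHom.id_comp ((alphaHom a).comp _), ← reducedHom_none]
        exact isWord_reducedHom_comp_alphaHom_comp_betaHom none a hkh
    · rw [List.concat_eq_append, reducedHom_concat, AlgHom.comp_assoc, AlgHom.comp_assoc,
        betaHom_comp_betaHom]
      exact isWord_reducedHom_comp_alphaHom_comp_betaHom _ a (dvd_add (X_sq_dvd_val l) hh)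

end CommRing

variable {K : Type*} [Field K]

theorem exists_lamOf_comp_betaHom {a₁ b₁ c₁ b₂ c₂ : K} (ht : a₁ * b₂ ≠ 0 * b₁) (h : K[X]) :
    ∃ (k : K[X]) (t : Aff K), Polynomial.X ^ 2 ∣ k ∧
      (lamOf (mkAff a₁ b₁ c₁ 0 b₂ c₂ ht)).comp (betaHom h) = (betaHom k).comp (lamOf t) := by
  let q := h.comp (Polynomial.C b₂ * Polynomial.X + Polynomial.C c₂)
  have ha : (C a₁ * C a₁⁻¹ : MvPolynomial (Fin 2) K) = 1 := by
    rw [← C_mul, mul_inv_cancel₀ (left_ne_zero_of_mul (by simpa using ht)), C_1]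
  have hq : Polynomial.aeval (C b₂ * X 1 + C c₂ : MvPolynomial (Fin 2) K) h =
      C (q.coeff 0) + C (q.coeff 1) * X 1 + X 1 ^ 2 * Polynomial.aeval (X 1) q.divX.divX := by
    simpa [q, Polynomial.aeval_comp, algebraMap_eq] using
      congrArg (Polynomial.aeval (X 1 : MvPolynomial (Fin 2) K)) (eq_affine_add_X_sq_mul q)
  refine ⟨Polynomial.X ^ 2 * (Polynomial.C a₁⁻¹ * q.divX.divX),
    mkAff a₁ (b₁ + q.coeff 1) (c₁ + q.coeff 0) 0 b₂ c₂ (by simpa using ht), dvd_mul_right _ _,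
    algHom_ext_fin_two ?_ (by simp [algHom_C, algebraMap_eq])⟩
  simp only [AlgHom.comp_apply, betaHom_X₀, betaHom_X₁, lamOf_mkAff_X₀, lamOf_mkAff_X₁, map_add,
    map_mul, map_pow, ← Polynomial.aeval_algHom_apply, algHom_C, algebraMap_eq, Polynomial.aeval_C,
    Polynomial.aeval_X, map_zero, zero_mul, zero_add, hq]
  linear_combination (-X 1 ^ 2 * Polynomial.aeval (X 1) q.divX.divX) * ha

theorem exists_lamOf_eq_alphaHom_comp {a₁ b₁ c₁ a₂ b₂ c₂ : K} (ht : a₁ * b₂ ≠ a₂ * b₁)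
    (ha : a₂ ≠ 0) :
    ∃ (a a' b' : K) (h : a' * a₂ ≠ 0 * b'), lamOf (mkAff a₁ b₁ c₁ a₂ b₂ c₂ ht) =
      (alphaHom a).comp (lamOf (mkAff a' b' c₁ 0 a₂ c₂ h)) := by
  have hb : C a₂ * C (b₂ / a₂) = (C b₂ : MvPolynomial (Fin 2) K) := by
    rw [← C_mul, mul_div_cancel₀ _ ha]
  refine ⟨b₂ / a₂, b₁ - a₁ * (b₂ / a₂), a₁, fun h => ht ?_, algHom_ext_fin_two ?_ ?_⟩
  · field_simp at h
    linear_combination -h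
  · simp only [AlgHom.comp_apply, alphaHom_X₀, alphaHom_X₁, lamOf_mkAff_X₀, map_add, map_mul,
      algHom_C, algebraMap_eq, map_sub]
    ring
  · simp only [AlgHom.comp_apply, alphaHom_X₀, alphaHom_X₁, lamOf_mkAff_X₁, map_add, map_mul,
      algHom_C, algebraMap_eq, map_zero]
    linear_combination (-X 1) * hb

theorem IsWord.comp_betaHom {φ : MvPolynomial (Fin 2) K →ₐ[K] MvPolynomial (Fin 2) K}
    (hφ : IsWord φ) (h : K[X]) : IsWord (φ.comp (betaHom h)) := by
  obtain ⟨w, t, rfl⟩ := hφ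
  obtain ⟨a₁, b₁, c₁, a₂, b₂, c₂, ht, rfl⟩ := exists_eq_mkAff t
  rcases eq_or_ne a₂ 0 with rfl | ha
  · obtain ⟨k, t', hk, hcomp⟩ := exists_lamOf_comp_betaHom (c₁ := c₁) (c₂ := c₂) ht h
    rw [AlgHom.comp_assoc, hcomp, ← AlgHom.comp_assoc]
    exact (isWord_reducedHom_comp_betaHom w hk).comp_lamOf t'
  · obtain ⟨a, a', b', ht', heq⟩ := exists_lamOf_eq_alphaHom_comp (c₁ := c₁) (c₂ := c₂) ht ha
    obtain ⟨k, t', hk, hcomp⟩ := exists_lamOf_comp_betaHom (c₁ := c₁) (c₂ := c₂) ht' h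
    rw [AlgHom.comp_assoc, heq, AlgHom.comp_assoc, hcomp, ← AlgHom.comp_assoc (alphaHom a),
      ← AlgHom.comp_assoc]
    exact (isWord_reducedHom_comp_alphaHom_comp_betaHom w a hk).comp_lamOf t'

theorem isWord_algEquiv (φ : MvPolynomial (Fin 2) K ≃ₐ[K] MvPolynomial (Fin 2) K) :
    IsWord φ.toAlgHom := by
  have hφ : φ ∈ tameSubgroup K := tameSubgroup_eq_top (K := K) ▸ Subgroup.mem_top φ
  induction hφ using Subgroup.closure_induction_right with
  | one => exact isWord_reducedHom none
  | mul_right ψ _ γ hγ ih =>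
    rcases hγ with ⟨t, rfl⟩ | ⟨h, rfl⟩
    exacts [ih.comp_lamOf t, ih.comp_betaHom h]
  | mul_inv_cancel ψ _ γ hγ ih =>
    rcases hγ with ⟨t, rfl⟩ | ⟨h, rfl⟩
    exacts [ih.comp_lamOf t⁻¹, ih.comp_betaHom (-h)]

theorem exists_wordHom_eq (φ : MvPolynomial (Fin 2) K ≃ₐ[K] MvPolynomial (Fin 2) K) :
    ∃ d : DecompData K, wordHom d = φ.toAlgHom := by
  obtain ⟨w, t, h⟩ := isWord_algEquiv φ
  exact ⟨(w, t), (wordHom_mk w t).trans h.symm⟩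

/-! ### The degree of a word -/

section CommRing

variable {σ R : Type*} [CommRing R]

theorem two_le_natDegree (h : H R) : 2 ≤ h.1.natDegree := by
  by_contra! hlt
  apply h.2.1
  rw [Polynomial.eq_X_add_C_of_natDegree_le_one (Nat.le_of_lt_succ hlt), h.2.2.1, h.2.2.2]
  simp

theorem two_le_degProd (oa : Option R) (h : H R) (rest : List (R × H R)) (t : Aff R) :
    2 ≤ degProd (some (oa, h, rest), t) := by
  have hpos : 0 < (rest.map fun p => p.2.1.natDegree).prod :=
    List.prod_pos fun n hn => by
      obtain ⟨p, -, rfl⟩ := List.mem_map.1 hn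
      exact two_pos.trans_le (two_le_natDegree p.2)
  exact (two_le_natDegree h).trans (Nat.le_mul_of_pos_right _ hpos)

theorem totalDegree_affine_le {p q : MvPolynomial σ R} (a b c : R)
    (h : q.totalDegree ≤ p.totalDegree) :
    (C a * p + C b * q + C c).totalDegree ≤ p.totalDegree := by
  rw [← smul_eq_C_mul, ← smul_eq_C_mul]
  refine (totalDegree_add _ _).trans (max_le ((totalDegree_add _ _).trans (max_le ?_ ?_)) ?_)
  · exact totalDegree_smul_le a p
  · exact (totalDegree_smul_le b q).trans h
  · rw [totalDegree_C]
    exact Nat.zero_le _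

theorem totalDegree_linear {a b : R} (c : R) (h : a ≠ 0 ∨ b ≠ 0) :
    (C a * X 0 + C b * X 1 + C c : MvPolynomial (Fin 2) R).totalDegree = 1 := by
  have : Nontrivial R := h.elim (nontrivial_of_ne _ _) (nontrivial_of_ne _ _)
  refine le_antisymm ((totalDegree_affine_le a b c (by simp)).trans (totalDegree_X 0).le) ?_
  rw [Nat.one_le_iff_ne_zero]
  intro h₀
  obtain ⟨r, hr⟩ : ∃ r, (C a * X 0 + C b * X 1 + C c : MvPolynomial (Fin 2) R) = C r :=
    ⟨_, totalDegree_eq_zero_iff_eq_C.1 h₀⟩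
  have hab : (a, b, c) = (0, 0, r) := eq_of_affine_eq (by rw [hr]; simp)
  simp only [Prod.mk.injEq] at hab
  exact h.elim (· hab.1) (· hab.2.1)

theorem totalDegree_lamOf_X₀ (t : Aff R) : (lamOf t (X 0)).totalDegree = 1 := by
  rw [lamOf_X₀]
  refine totalDegree_linear _ ?_
  by_contra! h
  exact t.2 (by rw [h.1, h.2, zero_mul, mul_zero])

theorem totalDegree_lamOf_X₁ (t : Aff R) : (lamOf t (X 1)).totalDegree = 1 := by
  rw [lamOf_X₁]
  refine totalDegree_linear _ ?_
  by_contra! h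
  exact t.2 (by rw [h.1, h.2, zero_mul, mul_zero])

theorem exists_alphaOpt_eq_lamOf [Nontrivial R] (oa : Option R) :
    ∃ t : Aff R, alphaOpt oa = lamOf t :=
  match oa with
  | none => ⟨1, lamOf_one.symm⟩
  | some a => ⟨_, alphaHom_eq_lamOf a⟩

theorem apply_lamOf_X₀ (f : MvPolynomial (Fin 2) R →ₐ[R] MvPolynomial (Fin 2) R) (t : Aff R) :
    f (lamOf t (X 0)) = C t.1.1.1 * f (X 0) + C t.1.1.2.1 * f (X 1) + C t.1.1.2.2 := by
  simp only [lamOf_X₀, map_add, map_mul, algHom_C, algebraMap_eq]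

theorem apply_lamOf_X₁ (f : MvPolynomial (Fin 2) R →ₐ[R] MvPolynomial (Fin 2) R) (t : Aff R) :
    f (lamOf t (X 1)) = C t.1.2.1 * f (X 0) + C t.1.2.2.1 * f (X 1) + C t.1.2.2.2 := by
  simp only [lamOf_X₁, map_add, map_mul, algHom_C, algebraMap_eq]

theorem reducedHom_nil_X₀ (oa : Option R) (h : H R) :
    reducedHom (some (oa, h, [])) (X 0) =
      alphaOpt oa (X 0) + Polynomial.aeval (alphaOpt oa (X 1)) h.1 := by
  rw [reducedHom_nil, AlgHom.comp_apply, betaHom_X₀, map_add, Polynomial.aeval_algHom_apply]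

theorem reducedHom_nil_X₁ (oa : Option R) (h : H R) :
    reducedHom (some (oa, h, [])) (X 1) = alphaOpt oa (X 1) := by
  rw [reducedHom_nil, AlgHom.comp_apply, betaHom_X₁]

theorem comp_alpha_beta_X₁ (f : MvPolynomial (Fin 2) R →ₐ[R] MvPolynomial (Fin 2) R) (a : R)
    (k : R[X]) :
    f.comp ((alphaHom a).comp (betaHom k)) (X 1) = f (X 0) + C a * f (X 1) := by
  rw [AlgHom.comp_apply, AlgHom.comp_apply, betaHom_X₁, alphaHom_X₁, map_add, map_mul, algHom_C,
    algebraMap_eq]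

theorem comp_alpha_beta_X₀ (f : MvPolynomial (Fin 2) R →ₐ[R] MvPolynomial (Fin 2) R) (a : R)
    (k : R[X]) :
    f.comp ((alphaHom a).comp (betaHom k)) (X 0) =
      f (X 1) + Polynomial.aeval (f.comp ((alphaHom a).comp (betaHom k)) (X 1)) k := by
  simp only [AlgHom.comp_apply, betaHom_X₀, betaHom_X₁, alphaHom_X₀, map_add,
    ← Polynomial.aeval_algHom_apply]

variable [IsDomain R]

theorem totalDegree_affine {p q : MvPolynomial σ R} {a : R} (b c : R) (ha : a ≠ 0)
    (h : q.totalDegree < p.totalDegree) :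
    (C a * p + C b * q + C c).totalDegree = p.totalDegree := by
  rw [add_assoc, totalDegree_add_eq_left_of_totalDegree_lt, totalDegree_C_mul ha]
  rw [totalDegree_C_mul ha]
  calc (C b * q + C c).totalDegree = (C b * q + C 0 * q + C c).totalDegree := by simp
    _ ≤ q.totalDegree := totalDegree_affine_le b 0 c le_rfl
    _ < p.totalDegree := h

theorem totalDegree_add_aeval {u v : MvPolynomial σ R} (h : H R) (hu : 1 ≤ u.totalDegree)
    (hv : v.totalDegree ≤ u.totalDegree) :
    (v + Polynomial.aeval u h.1).totalDegree = h.1.natDegree * u.totalDegree := by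
  have := Nat.mul_le_mul_right u.totalDegree (two_le_natDegree h)
  rw [totalDegree_add_eq_right_of_totalDegree_lt, totalDegree_polynomial_aeval]
  rw [totalDegree_polynomial_aeval]
  omega

theorem totalDegree_reducedHom_nil_X₁ (oa : Option R) (h : H R) :
    (reducedHom (some (oa, h, [])) (X 1)).totalDegree = 1 := by
  obtain ⟨t, ht⟩ := exists_alphaOpt_eq_lamOf oa
  rw [reducedHom_nil_X₁, ht, totalDegree_lamOf_X₁]

theorem totalDegree_reducedHom_nil_X₀ (oa : Option R) (h : H R) :
    (reducedHom (some (oa, h, [])) (X 0)).totalDegree = h.1.natDegree := by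
  obtain ⟨t, ht⟩ := exists_alphaOpt_eq_lamOf oa
  rw [reducedHom_nil_X₀, ht, totalDegree_add_aeval h (totalDegree_lamOf_X₁ t).ge
    (by rw [totalDegree_lamOf_X₀, totalDegree_lamOf_X₁]), totalDegree_lamOf_X₁, mul_one]

theorem totalDegree_comp_alpha_beta_X₁ {f : MvPolynomial (Fin 2) R →ₐ[R] MvPolynomial (Fin 2) R}
    (hf : (f (X 1)).totalDegree < (f (X 0)).totalDegree) (a : R) (k : R[X]) :
    (f.comp ((alphaHom a).comp (betaHom k)) (X 1)).totalDegree = (f (X 0)).totalDegree := by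
  rw [comp_alpha_beta_X₁]
  simpa using totalDegree_affine a 0 one_ne_zero hf

theorem totalDegree_comp_alpha_beta_X₀ {f : MvPolynomial (Fin 2) R →ₐ[R] MvPolynomial (Fin 2) R}
    (hf : (f (X 1)).totalDegree < (f (X 0)).totalDegree) (a : R) (k : H R) :
    (f.comp ((alphaHom a).comp (betaHom k.1)) (X 0)).totalDegree =
      k.1.natDegree * (f (X 0)).totalDegree := by
  have h₁ := totalDegree_comp_alpha_beta_X₁ hf a k.1
  rw [comp_alpha_beta_X₀, totalDegree_add_aeval k (by omega) (by omega), h₁]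

theorem totalDegree_reducedHom_X₁_lt (oa : Option R) (h : H R) (rest : List (R × H R)) :
    (reducedHom (some (oa, h, rest)) (X 1)).totalDegree <
      (reducedHom (some (oa, h, rest)) (X 0)).totalDegree := by
  induction rest using List.reverseRecOn with
  | nil =>
    rw [totalDegree_reducedHom_nil_X₁, totalDegree_reducedHom_nil_X₀]
    exact two_le_natDegree h
  | append_singleton rest p ih =>
    rw [reducedHom_concat, totalDegree_comp_alpha_beta_X₁ ih, totalDegree_comp_alpha_beta_X₀ ih]
    exact lt_mul_left (Nat.zero_lt_of_lt ih) (two_le_natDegree p.2)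

theorem totalDegree_reducedHom_X₀ (oa : Option R) (h : H R) (rest : List (R × H R)) :
    (reducedHom (some (oa, h, rest)) (X 0)).totalDegree =
      h.1.natDegree * (rest.map fun p => p.2.1.natDegree).prod := by
  induction rest using List.reverseRecOn with
  | nil => rw [totalDegree_reducedHom_nil_X₀, List.map_nil, List.prod_nil, mul_one]
  | append_singleton rest p ih =>
    rw [reducedHom_concat,
      totalDegree_comp_alpha_beta_X₀ (totalDegree_reducedHom_X₁_lt oa h rest), ih,
      List.map_append, List.prod_append, List.map_singleton, List.prod_singleton, mul_left_comm,
      mul_comm p.2.1.natDegree]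

theorem max_totalDegree_apply_lamOf {f : MvPolynomial (Fin 2) R →ₐ[R] MvPolynomial (Fin 2) R}
    (hf : (f (X 1)).totalDegree < (f (X 0)).totalDegree) (t : Aff R) :
    max (f (lamOf t (X 0))).totalDegree (f (lamOf t (X 1))).totalDegree =
      (f (X 0)).totalDegree := by
  rw [apply_lamOf_X₀, apply_lamOf_X₁]
  refine le_antisymm (max_le (totalDegree_affine_le _ _ _ hf.le)
    (totalDegree_affine_le _ _ _ hf.le)) ?_
  rcases eq_or_ne t.1.1.1 0 with h₁ | h₁
  · refine le_max_of_le_right (totalDegree_affine _ _ (fun h₂ => t.2 ?_) hf).ge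
    rw [h₁, h₂, zero_mul, zero_mul]
  · exact le_max_of_le_left (totalDegree_affine _ _ h₁ hf).ge

theorem max_totalDegree_wordHom (d : DecompData R) :
    max (wordHom d (X 0)).totalDegree (wordHom d (X 1)).totalDegree = degProd d := by
  obtain ⟨w, t⟩ := d
  match w with
  | none =>
    exact (congrArg₂ max (totalDegree_lamOf_X₀ t) (totalDegree_lamOf_X₁ t)).trans (max_self 1)
  | some (oa, h, rest) =>
    rw [wordHom_mk]
    exact (max_totalDegree_apply_lamOf (totalDegree_reducedHom_X₁_lt oa h rest) t).trans
      (totalDegree_reducedHom_X₀ oa h rest)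

end CommRing

/-! ### Uniqueness of the normal form -/

section CommRing

variable {R : Type*} [CommRing R]

theorem constantCoeff_algHom_apply {f : MvPolynomial (Fin 2) R →ₐ[R] MvPolynomial (Fin 2) R}
    (h₀ : constantCoeff (f (X 0)) = 0) (h₁ : constantCoeff (f (X 1)) = 0)
    (p : MvPolynomial (Fin 2) R) : constantCoeff (f p) = constantCoeff p := by
  have hf : constantCoeff.comp (f : MvPolynomial (Fin 2) R →+* MvPolynomial (Fin 2) R) =
      constantCoeff :=
    ringHom_ext (fun r => by simp [algHom_C, algebraMap_eq]) fun i => by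
      fin_cases i <;> simp [h₀, h₁]
  exact DFunLike.congr_fun hf p

theorem constantCoeff_alphaHom (a : R) (p : MvPolynomial (Fin 2) R) :
    constantCoeff (alphaHom a p) = constantCoeff p :=
  constantCoeff_algHom_apply (by simp) (by simp) p

theorem constantCoeff_alphaOpt (oa : Option R) (p : MvPolynomial (Fin 2) R) :
    constantCoeff (alphaOpt oa p) = constantCoeff p :=
  match oa with
  | none => rfl
  | some a => constantCoeff_alphaHom a p

theorem constantCoeff_betaHom (h : H R) (p : MvPolynomial (Fin 2) R) :
    constantCoeff (betaHom h.1 p) = constantCoeff p := by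
  refine constantCoeff_algHom_apply ?_ (by simp) p
  rw [betaHom_X₀, map_add, constantCoeff_X, zero_add, Polynomial.aeval_def,
    Polynomial.hom_eval₂, constantCoeff_X, Polynomial.eval₂_at_zero, h.2.2.1, map_zero]

theorem constantCoeff_restHom_id (rest : List (R × H R)) (p : MvPolynomial (Fin 2) R) :
    constantCoeff (restHom rest (AlgHom.id R _) p) = constantCoeff p := by
  induction rest with
  | nil => rfl
  | cons q rest ih =>
    rw [restHom_cons, AlgHom.comp_apply, AlgHom.comp_apply, constantCoeff_alphaHom,
      constantCoeff_betaHom, ih]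

theorem constantCoeff_reducedHom_some (oa : Option R) (h : H R) (rest : List (R × H R))
    (p : MvPolynomial (Fin 2) R) :
    constantCoeff (reducedHom (some (oa, h, rest)) p) = constantCoeff p := by
  rw [reducedHom_some, AlgHom.comp_apply, AlgHom.comp_apply, constantCoeff_alphaOpt,
    constantCoeff_betaHom, constantCoeff_restHom_id]

theorem alphaHom_injective (a : R) : Function.Injective (alphaHom a) := by
  have h : (aeval ![X 1 - C a * X 0, X 0]).comp (alphaHom a) =
      AlgHom.id R (MvPolynomial (Fin 2) R) :=
    algHom_ext_fin_two (by simp) (by simp [algebraMap_eq])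
  have hleft (p : MvPolynomial (Fin 2) R) : aeval ![X 1 - C a * X 0, X 0] (alphaHom a p) = p :=
    DFunLike.congr_fun h p
  exact Function.LeftInverse.injective hleft

theorem alphaOpt_injective (oa : Option R) : Function.Injective (alphaOpt oa) :=
  match oa with
  | none => Function.injective_id
  | some a => alphaHom_injective a

theorem eq_of_alphaOpt_X₁_eq {oa oa' : Option R} {s : R} (hs : s ≠ 0)
    (h : alphaOpt oa' (X 1) = C s * alphaOpt oa (X 1)) : oa = oa' := by
  match oa, oa' with
  | none, none => rfl
  | some a, none =>
    have h' : ((0, 1, 0) : R × R × R) = (s, s * a, 0) :=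
      eq_of_affine_eq (by simpa [alphaOpt_none, alphaOpt_some, mul_add, mul_assoc] using h)
    exact absurd (congrArg Prod.fst h').symm hs
  | none, some a =>
    have h' : ((1, a, 0) : R × R × R) = (0, s, 0) :=
      eq_of_affine_eq (by simpa [alphaOpt_none, alphaOpt_some] using h)
    have : Nontrivial R := nontrivial_of_ne _ _ hs
    exact absurd (congrArg Prod.fst h') one_ne_zero
  | some a, some a' =>
    have h' : ((1, a', 0) : R × R × R) = (s, s * a, 0) :=
      eq_of_affine_eq (by simpa [alphaOpt_some, mul_add, mul_assoc] using h)
    simp only [Prod.mk.injEq, and_true] at h'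
    rw [h'.2, ← h'.1, one_mul]

theorem eq_and_eq_of_C_mul_X_add_aeval_eq {a b : R} {p q : R[X]}
    (h : (C a * X 0 + Polynomial.aeval (X 1) p : MvPolynomial (Fin 2) R) =
      C b * X 0 + Polynomial.aeval (X 1) q) : a = b ∧ p = q := by
  have hpq : p = q := by
    simpa [← Polynomial.aeval_algHom_apply] using congrArg (aeval ![0, (Polynomial.X : R[X])]) h
  subst hpq
  have hab := congrArg (eval ![1, 0]) (add_right_cancel h)
  exact ⟨by simpa using hab, rfl⟩

theorem reducedHom_nil_rigidity {oa oa' : Option R} {h h' : H R} {c d s : R} (hs : s ≠ 0)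
    (e₀ : reducedHom (some (oa', h', [])) (X 0) =
      C c * reducedHom (some (oa, h, [])) (X 0) + C d * reducedHom (some (oa, h, [])) (X 1))
    (e₁ : reducedHom (some (oa', h', [])) (X 1) = C s * reducedHom (some (oa, h, [])) (X 1)) :
    oa = oa' ∧ h = h' ∧ c = 1 ∧ d = 0 ∧ s = 1 := by
  rw [reducedHom_nil_X₁, reducedHom_nil_X₁] at e₁
  obtain rfl := eq_of_alphaOpt_X₁_eq hs e₁
  have hX₁ : (X 1 : MvPolynomial (Fin 2) R) = C s * X 1 :=
    alphaOpt_injective oa (by rw [e₁, map_mul, algHom_C, algebraMap_eq])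
  have hX₀ : betaHom h'.1 (X 0) = C c * betaHom h.1 (X 0) + C d * betaHom h.1 (X 1) := by
    refine alphaOpt_injective oa ?_
    simpa only [reducedHom_nil, AlgHom.comp_apply, map_add, map_mul, algHom_C, algebraMap_eq]
      using e₀
  have hs' : ((0, 1, 0) : R × R × R) = (0, s, 0) := eq_of_affine_eq (by simpa using hX₁)
  obtain ⟨hc, hh⟩ : 1 = c ∧ h'.1 = Polynomial.C c * h.1 + Polynomial.C d * Polynomial.X := by
    refine eq_and_eq_of_C_mul_X_add_aeval_eq ?_
    simpa [mul_add, add_assoc, algebraMap_eq] using hX₀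
  have hd : 0 = d := by
    simpa [h.2.2.2, h'.2.2.2] using congrArg (Polynomial.coeff · 1) hh
  subst hc hd
  refine ⟨rfl, Subtype.ext ?_, rfl, rfl, (congrArg (·.2.1) hs').symm⟩
  simpa using hh.symm

end CommRing

section IsDomain

variable {σ R : Type*} [CommRing R] [IsDomain R]

theorem eq_zero_of_totalDegree_aeval_lt {u : MvPolynomial σ R} {g : R[X]} (hg : g.coeff 0 = 0)
    (h : (Polynomial.aeval u g).totalDegree < u.totalDegree) : g = 0 := by
  rw [totalDegree_polynomial_aeval] at h
  have h₀ : g.natDegree = 0 := by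
    by_contra hne
    exact h.not_ge (Nat.le_mul_of_pos_left _ (Nat.pos_of_ne_zero hne))
  rw [Polynomial.eq_C_of_natDegree_eq_zero h₀, hg, Polynomial.C_0]

/-- The two sides differ by a polynomial in `u` whose total degree is less than that of `u`; such a
polynomial is constant. -/
theorem add_aeval_rigidity {u v v' : MvPolynomial σ R} {c d s : R} {h h' : H R}
    (hv : v.totalDegree < u.totalDegree) (hv' : v'.totalDegree < u.totalDegree)
    (e : v' + Polynomial.aeval (C s * u) h'.1 = C c * (v + Polynomial.aeval u h.1) + C d * u) :
    d = 0 ∧ v' = C c * v ∧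
      h'.1.comp (Polynomial.C s * Polynomial.X) = Polynomial.C c * h.1 := by
  let g := h'.1.comp (Polynomial.C s * Polynomial.X) - Polynomial.C c * h.1 -
    Polynomial.C d * Polynomial.X
  have hgu : Polynomial.aeval u g = C c * v - v' := by
    simp only [g, map_sub, map_mul, Polynomial.aeval_comp, Polynomial.aeval_C,
      Polynomial.aeval_X, algebraMap_eq]
    linear_combination e
  have hg : g = 0 := by
    refine eq_zero_of_totalDegree_aeval_lt (u := u) ?_ ?_
    · simp [g, Polynomial.comp_C_mul_X_coeff, h.2.2.1, h'.2.2.1]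
    · rw [hgu, ← smul_eq_C_mul]
      exact (totalDegree_sub _ _).trans_lt (max_lt ((totalDegree_smul_le c v).trans_lt hv) hv')
  have hd : d = 0 := by
    simpa [g, Polynomial.comp_C_mul_X_coeff, h.2.2.2, h'.2.2.2] using
      congrArg (Polynomial.coeff · 1) hg
  refine ⟨hd, ?_, ?_⟩
  · rw [hg, map_zero] at hgu
    exact (sub_eq_zero.1 hgu.symm).symm
  · simpa [g, hd, sub_eq_zero] using hg

theorem comp_alpha_beta_rigidity
    {f f' : MvPolynomial (Fin 2) R →ₐ[R] MvPolynomial (Fin 2) R} {a a' c d s : R} {k k' : H R}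
    (hf : (f (X 1)).totalDegree < (f (X 0)).totalDegree)
    (hf' : (f' (X 1)).totalDegree < (f' (X 0)).totalDegree) (hs : s ≠ 0)
    (e₀ : f'.comp ((alphaHom a').comp (betaHom k'.1)) (X 0) =
      C c * f.comp ((alphaHom a).comp (betaHom k.1)) (X 0) +
        C d * f.comp ((alphaHom a).comp (betaHom k.1)) (X 1))
    (e₁ : f'.comp ((alphaHom a').comp (betaHom k'.1)) (X 1) =
      C s * f.comp ((alphaHom a).comp (betaHom k.1)) (X 1)) :
    d = 0 ∧ f' (X 1) = C c * f (X 1) ∧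
      f' (X 0) = C s * f (X 0) + C (s * a - a' * c) * f (X 1) ∧
      k'.1.comp (Polynomial.C s * Polynomial.X) = Polynomial.C c * k.1 := by
  have hu := totalDegree_comp_alpha_beta_X₁ hf a k.1
  have hdeg : (f' (X 0)).totalDegree = (f (X 0)).totalDegree := by
    rw [← totalDegree_comp_alpha_beta_X₁ hf' a' k'.1, e₁, totalDegree_C_mul hs, hu]
  rw [comp_alpha_beta_X₀, comp_alpha_beta_X₀ f, e₁] at e₀
  obtain ⟨hd, hX₁, hk⟩ := add_aeval_rigidity (by omega) (by omega) e₀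
  refine ⟨hd, hX₁, ?_, hk⟩
  rw [comp_alpha_beta_X₁, comp_alpha_beta_X₁, hX₁] at e₁
  simp only [C_sub, C_mul]
  linear_combination e₁

theorem totalDegree_reducedHom_nil_X₁_lt_concat (oa oa' : Option R) (h h' : H R)
    (rest : List (R × H R)) (p : R × H R) :
    (reducedHom (some (oa, h, [])) (X 1)).totalDegree <
      (reducedHom (some (oa', h', rest ++ [p])) (X 1)).totalDegree := by
  have hlt := totalDegree_reducedHom_X₁_lt oa' h' rest
  rw [totalDegree_reducedHom_nil_X₁, reducedHom_concat, totalDegree_comp_alpha_beta_X₁ hlt,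
    totalDegree_reducedHom_X₀]
  exact two_le_degProd oa' h' rest 1

/-- Peeling off the last factor from both sides exchanges the components, hence swaps `c` and `s`,
and turns equality into equality up to scalars and a multiple of the second component. -/
theorem reducedHom_rigidity {oa oa' : Option R} {h h' : H R} {rest rest' : List (R × H R)}
    {c d s : R} (hc : c ≠ 0) (hs : s ≠ 0)
    (e₀ : reducedHom (some (oa', h', rest')) (X 0) =
      C c * reducedHom (some (oa, h, rest)) (X 0) + C d * reducedHom (some (oa, h, rest)) (X 1))
    (e₁ : reducedHom (some (oa', h', rest')) (X 1) =
      C s * reducedHom (some (oa, h, rest)) (X 1)) :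
    (oa = oa' ∧ h = h' ∧ rest = rest') ∧ c = 1 ∧ d = 0 ∧ s = 1 := by
  have hdeg := (congrArg totalDegree e₁).trans (totalDegree_C_mul hs _)
  induction rest using List.reverseRecOn generalizing rest' c d s with
  | nil =>
    rcases List.eq_nil_or_concat' rest' with rfl | ⟨rest', p', rfl⟩
    · obtain ⟨ho, hh, hcds⟩ := reducedHom_nil_rigidity hs e₀ e₁
      exact ⟨⟨ho, hh, rfl⟩, hcds⟩
    · exact absurd hdeg (totalDegree_reducedHom_nil_X₁_lt_concat ..).ne'
  | append_singleton rest p ih =>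
    rcases List.eq_nil_or_concat' rest' with rfl | ⟨rest', p', rfl⟩
    · exact absurd hdeg (totalDegree_reducedHom_nil_X₁_lt_concat ..).ne
    · obtain ⟨a, k⟩ := p
      obtain ⟨a', k'⟩ := p'
      rw [reducedHom_concat, reducedHom_concat] at e₀ e₁
      obtain ⟨hd, hX₁, hX₀, hk⟩ := comp_alpha_beta_rigidity
        (totalDegree_reducedHom_X₁_lt oa h rest) (totalDegree_reducedHom_X₁_lt oa' h' rest') hs
        e₀ e₁
      obtain ⟨⟨ho, hh, rfl⟩, rfl, ha, rfl⟩ := ih hs hc hX₀ hX₁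
        ((congrArg totalDegree hX₁).trans (totalDegree_C_mul hc _))
      have haa' : a = a' := by linear_combination ha
      have hkk' : k = k' := Subtype.ext (by simpa using hk.symm)
      exact ⟨⟨ho, hh, by rw [haa', hkk']⟩, rfl, hd, rfl⟩

theorem eq_and_eq_one_of_reducedHom_eq_comp_lamOf {oa oa' : Option R} {h h' : H R}
    {rest rest' : List (R × H R)} {t : Aff R}
    (e : reducedHom (some (oa', h', rest')) =
      (reducedHom (some (oa, h, rest))).comp (lamOf t)) :
    (oa, h, rest) = (oa', h', rest') ∧ t = 1 := by
  obtain ⟨a₁, b₁, c₁, a₂, b₂, c₂, ht, rfl⟩ := exists_eq_mkAff t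
  have e₀ := DFunLike.congr_fun e (X 0)
  have e₁ := DFunLike.congr_fun e (X 1)
  rw [AlgHom.comp_apply, apply_lamOf_X₀] at e₀
  rw [AlgHom.comp_apply, apply_lamOf_X₁] at e₁
  simp only [mkAff] at e₀ e₁
  have hlt := totalDegree_reducedHom_X₁_lt oa h rest
  have hlt' := totalDegree_reducedHom_X₁_lt oa' h' rest'
  obtain rfl : a₂ = 0 := by
    by_contra ha
    refine hlt'.not_ge ?_
    rw [e₀, e₁, totalDegree_affine b₂ c₂ ha hlt]
    exact totalDegree_affine_le _ _ _ hlt.le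
  obtain rfl : 0 = c₁ := by
    simpa [constantCoeff_reducedHom_some] using congrArg constantCoeff e₀
  obtain rfl : 0 = c₂ := by
    simpa [constantCoeff_reducedHom_some] using congrArg constantCoeff e₁
  rw [C_0, add_zero] at e₀
  rw [C_0, add_zero, zero_mul, zero_add] at e₁
  have hab : a₁ * b₂ ≠ 0 := by simpa using ht
  obtain ⟨⟨rfl, rfl, rfl⟩, rfl, rfl, rfl⟩ :=
    reducedHom_rigidity (left_ne_zero_of_mul hab) (right_ne_zero_of_mul hab) e₀ e₁
  exact ⟨rfl, rfl⟩

theorem degProd_eq_of_wordHom_eq {d d' : DecompData R} (h : wordHom d = wordHom d') :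
    degProd d = degProd d' := by
  rw [← max_totalDegree_wordHom, h, max_totalDegree_wordHom]

end IsDomain

variable {K : Type*} [Field K]

theorem wordHom_injective : Function.Injective (wordHom (K := K)) := by
  rintro ⟨w, t⟩ ⟨w', t'⟩ e
  have hdeg := degProd_eq_of_wordHom_eq e
  match w, w' with
  | none, none => exact congrArg (Prod.mk none) (lamOf_injective e)
  | none, some (oa', h', rest') =>
    exact absurd hdeg (show 1 < _ from two_le_degProd oa' h' rest' t').ne
  | some (oa, h, rest), none =>
    exact absurd hdeg (show 1 < _ from two_le_degProd oa h rest t).ne'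
  | some (oa, h, rest), some (oa', h', rest') =>
    rw [wordHom_mk, wordHom_mk] at e
    have e' : reducedHom (some (oa', h', rest')) =
        (reducedHom (some (oa, h, rest))).comp (lamOf (t * t'⁻¹)) := by
      rw [lamOf_mul, ← AlgHom.comp_assoc, e, AlgHom.comp_assoc, ← lamOf_mul, mul_inv_cancel,
        lamOf_one, AlgHom.comp_id]
    obtain ⟨hw, ht⟩ := eq_and_eq_one_of_reducedHom_eq_comp_lamOf e'
    rw [hw, mul_inv_eq_one.1 ht]

end PlaneAut

/-- Every automorphism `φ` of `K[x,y]` can be written uniquely as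
`α₁∘β₁∘α₂∘β₂∘⋯∘α_k∘β_k∘λ` with `α_i ∈ {ι} ∪ {(y, x+ay)}` (`α₂,…,α_k ≠ ι`),
`β_i = (x + h_i(y), y)` with `0 ≠ h_i ∈ y²K[y]`, and `λ` affine; moreover
`deg φ = deg(h₁)⋯deg(h_k)`. -/
theorem stmt_8 (K : Type*) [Field K]
    (φ : MvPolynomial (Fin 2) K ≃ₐ[K] MvPolynomial (Fin 2) K) :
    (∃! d : DecompData K, wordHom d = φ.toAlgHom) ∧
    (∀ d : DecompData K, wordHom d = φ.toAlgHom →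
      max (φ (X 0)).totalDegree (φ (X 1)).totalDegree = degProd d) := by
  refine ⟨?_, fun d hd => ?_⟩
  · obtain ⟨d, hd⟩ := PlaneAut.exists_wordHom_eq φ
    exact ⟨d, hd, fun d' hd' => PlaneAut.wordHom_injective (hd'.trans hd.symm)⟩
  · rw [← PlaneAut.max_totalDegree_wordHom, hd]
    rfl
end

section
/- For any field K, the elements (y, x + a y) for a ∈ K, together with the identity, form a complete set of left coset representatives of the affine group A of Aut(K[x,y]) modulo C = A ∩ B, where B is the group of triangular automorphisms; i.e., every affine automorphism λ is either in C or can be written uniquely as (y, x + ay)∘γ with a ∈ K, γ ∈ C. -/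
open MvPolynomial

/-- The endomorphism of `K[x,y]` corresponding to the affine pair
`(a₁x + b₁y + c₁, a₂x + b₂y + c₂)`. -/
noncomputable def lamHom {K : Type*} [CommRing K] (a₁ b₁ c₁ a₂ b₂ c₂ : K) :
    MvPolynomial (Fin 2) K →ₐ[K] MvPolynomial (Fin 2) K :=
  aeval ![C a₁ * X 0 + C b₁ * X 1 + C c₁, C a₂ * X 0 + C b₂ * X 1 + C c₂]

/-- The endomorphism of `K[x,y]` corresponding to the triangular pair
`(ax + h(y), by + b₁)`. -/
noncomputable def triHom {K : Type*} [CommRing K] (a : K) (h : Polynomial K) (b b₁ : K) :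
    MvPolynomial (Fin 2) K →ₐ[K] MvPolynomial (Fin 2) K :=
  aeval ![C a * X 0 + Polynomial.aeval (X 1 : MvPolynomial (Fin 2) K) h, C b * X 1 + C b₁]

/-- `φ` is an affine automorphism of `K[x,y]`. -/
def IsAffine {K : Type*} [CommRing K]
    (φ : MvPolynomial (Fin 2) K ≃ₐ[K] MvPolynomial (Fin 2) K) : Prop :=
  ∃ a₁ b₁ c₁ a₂ b₂ c₂ : K, a₁ * b₂ ≠ a₂ * b₁ ∧ φ.toAlgHom = lamHom a₁ b₁ c₁ a₂ b₂ c₂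

/-- `φ` is a triangular automorphism of `K[x,y]`. -/
def IsTriangular {K : Type*} [CommRing K]
    (φ : MvPolynomial (Fin 2) K ≃ₐ[K] MvPolynomial (Fin 2) K) : Prop :=
  ∃ (a b b₁ : K) (h : Polynomial K), a ≠ 0 ∧ b ≠ 0 ∧ φ.toAlgHom = triHom a h b b₁

/-!
Left composition with `(y, x + a y)⁻¹` turns an affine automorphism with second component
`a₂ x + b₂ y + c₂` into one with second component `(b₂ - a a₂) x + a₂ y + c₂`. An affine
automorphism is triangular exactly when `x` does not occur in its second component. So either
`a₂ = 0` and the given automorphism already lies in `C`, or `a = b₂ / a₂` is the only parameter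
for which the resulting automorphism lies in `C`.
-/

section Decomposition

variable {K : Type*} [CommRing K]

/-- The automorphism `(y, x + a y)` of `K[x,y]`, with inverse `(y - a x, x)`: `alphaHom a` bundled
as an equivalence, so that it can be cancelled from a composition. -/
noncomputable def alphaEquiv (a : K) :
    MvPolynomial (Fin 2) K ≃ₐ[K] MvPolynomial (Fin 2) K :=
  AlgEquiv.ofAlgHom (alphaHom a) (aeval ![X 1 - C a * X 0, X 0])
    (by ext1 i; fin_cases i <;> simp [alphaHom])
    (by ext1 i; fin_cases i <;> simp [alphaHom])

theorem toAlgHom_eq_alphaHom_comp_iff (a : K)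
    (φ γ : MvPolynomial (Fin 2) K ≃ₐ[K] MvPolynomial (Fin 2) K) :
    φ.toAlgHom = (alphaHom a).comp γ.toAlgHom ↔ γ = φ.trans (alphaEquiv a).symm := by
  simp only [AlgHom.ext_iff, AlgEquiv.ext_iff]
  exact forall_congr' fun p => eq_comm.trans (alphaEquiv a).eq_symm_apply.symm

theorem alphaEquiv_symm_comp_lamHom (a a₁ b₁ c₁ a₂ b₂ c₂ : K) :
    (alphaEquiv a).symm.toAlgHom.comp (lamHom a₁ b₁ c₁ a₂ b₂ c₂) =
      lamHom (b₁ - a * a₁) a₁ c₁ (b₂ - a * a₂) a₂ c₂ := by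
  ext1 i
  fin_cases i <;> simp [alphaEquiv, lamHom] <;> ring

theorem lamHom_eq_triHom (a₁ b₁ c₁ b₂ c₂ : K) :
    lamHom a₁ b₁ c₁ 0 b₂ c₂ = triHom a₁ (.C b₁ * .X + .C c₁) b₂ c₂ := by
  ext1 i
  fin_cases i <;> simp [lamHom, triHom, add_assoc]

theorem eq_zero_of_lamHom_eq_triHom {a₁ b₁ c₁ a₂ b₂ c₂ a b d : K} {h : Polynomial K}
    (H : lamHom a₁ b₁ c₁ a₂ b₂ c₂ = triHom a h b d) : a₂ = 0 := by
  have second_eq : (C a₂ * X 0 + C b₂ * X 1 + C c₂ : MvPolynomial (Fin 2) K) =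
      C b * X 1 + C d := by
    simpa [lamHom, triHom] using DFunLike.congr_fun H (X 1)
  simpa using congrArg (pderiv 0) second_eq

variable {φ : MvPolynomial (Fin 2) K ≃ₐ[K] MvPolynomial (Fin 2) K} {a₁ b₁ c₁ a₂ b₂ c₂ : K}

theorem isTriangular_iff_of_toAlgHom_eq_lamHom (hdet : a₁ * b₂ ≠ a₂ * b₁)
    (hφ : φ.toAlgHom = lamHom a₁ b₁ c₁ a₂ b₂ c₂) : IsTriangular φ ↔ a₂ = 0 := by
  constructor
  · rintro ⟨a, b, d, h, -, -, hφ'⟩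
    exact eq_zero_of_lamHom_eq_triHom (hφ.symm.trans hφ')
  · rintro rfl
    rw [zero_mul] at hdet
    exact ⟨a₁, b₂, c₂, _, left_ne_zero_of_mul hdet, right_ne_zero_of_mul hdet,
      hφ.trans (lamHom_eq_triHom ..)⟩

theorem toAlgHom_trans_alphaEquiv_symm (hφ : φ.toAlgHom = lamHom a₁ b₁ c₁ a₂ b₂ c₂) (a : K) :
    (φ.trans (alphaEquiv a).symm).toAlgHom =
      lamHom (b₁ - a * a₁) a₁ c₁ (b₂ - a * a₂) a₂ c₂ := by
  rw [← alphaEquiv_symm_comp_lamHom, ← hφ]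
  rfl

theorem det_trans_alphaEquiv_symm_ne (hdet : a₁ * b₂ ≠ a₂ * b₁) (a : K) :
    (b₁ - a * a₁) * a₂ ≠ (b₂ - a * a₂) * a₁ :=
  fun h => hdet (by linear_combination -h)

theorem IsAffine.trans_alphaEquiv_symm (hφ : IsAffine φ) (a : K) :
    IsAffine (φ.trans (alphaEquiv a).symm) := by
  obtain ⟨a₁, b₁, c₁, a₂, b₂, c₂, hdet, hφ⟩ := hφ
  exact ⟨_, _, _, _, _, _, det_trans_alphaEquiv_symm_ne hdet a,
    toAlgHom_trans_alphaEquiv_symm hφ a⟩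

theorem isTriangular_trans_alphaEquiv_symm_iff (hdet : a₁ * b₂ ≠ a₂ * b₁)
    (hφ : φ.toAlgHom = lamHom a₁ b₁ c₁ a₂ b₂ c₂) (a : K) :
    IsTriangular (φ.trans (alphaEquiv a).symm) ↔ a * a₂ = b₂ := by
  rw [isTriangular_iff_of_toAlgHom_eq_lamHom (det_trans_alphaEquiv_symm_ne hdet a)
    (toAlgHom_trans_alphaEquiv_symm hφ a), sub_eq_zero, eq_comm]

end Decomposition

/-- The identity together with the automorphisms `(y, x + ay)`, `a ∈ K`, form a complete
set of left coset representatives of the affine group `A` modulo `C = A ∩ B`: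
every affine automorphism `λ` either lies in `C` (i.e. is also triangular) or can be
written uniquely as `(y, x + ay) ∘ γ` with `a ∈ K` and `γ ∈ C`. -/
theorem stmt_10 (K : Type*) [Field K]
    (φ : MvPolynomial (Fin 2) K ≃ₐ[K] MvPolynomial (Fin 2) K) (hφ : IsAffine φ) :
    IsTriangular φ ∨
      ∃! p : K × {γ : MvPolynomial (Fin 2) K ≃ₐ[K] MvPolynomial (Fin 2) K //
            IsAffine γ ∧ IsTriangular γ},
        φ.toAlgHom = (alphaHom p.1).comp p.2.1.toAlgHom := by
  have isAffine_trans := hφ.trans_alphaEquiv_symm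
  obtain ⟨a₁, b₁, c₁, a₂, b₂, c₂, hdet, hφ⟩ := hφ
  by_cases ha₂ : a₂ = 0
  · exact .inl ((isTriangular_iff_of_toAlgHom_eq_lamHom hdet hφ).2 ha₂)
  have triangular_iff (a : K) : IsTriangular (φ.trans (alphaEquiv a).symm) ↔ a = b₂ / a₂ :=
    (isTriangular_trans_alphaEquiv_symm_iff hdet hφ a).trans (eq_div_iff ha₂).symm
  refine .inr ⟨(b₂ / a₂,
    ⟨φ.trans (alphaEquiv (b₂ / a₂)).symm, isAffine_trans _, (triangular_iff _).2 rfl⟩),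
    (toAlgHom_eq_alphaHom_comp_iff ..).2 rfl, ?_⟩
  rintro ⟨a, γ, _, hγ⟩ h
  obtain rfl := (toAlgHom_eq_alphaHom_comp_iff a φ γ).1 h
  obtain rfl := (triangular_iff a).1 hγ
  rfl
end
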